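/- arXiv:2407.18315 — 2 statements merged into one kernel-verified Lean document; each statement's English description precedes it below -/
import Mathlib

section
/- Let 1 ≤ p < ∞ and let (X,d,μ) satisfy the standing assumptions and have uniformly locally p-controlled geometry. (i) If there exist finitely many ends at infinity of X such that every end of X is the same as one of them, and every end of X is p-parabolic, then X is p-parabolic. (ii) If X has at least one p-hyperbolic end at infinity, then X is p-hyperbolic. -/
/-!
# Parabolicity of a space and of its ends

**A hyperbolic end forces hyperbolicity.** If `X` is parabolic, there are condenser potentials
`u`, equal to `1` on a ball containing `K₁` and vanishing far away, with upper gradients `g` of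
arbitrarily small energy. The sets `F_j` leave every bounded set, so along a ray of `Γ_j` with `j`
large `u` drops from `1` to `0`; hence `g` is admissible for `Γ_j`, and the modulus of the end
vanishes (`not_isPParabolic_of_hyperbolic_end`). No geometric hypothesis is used here.

**Parabolic ends force parabolicity.** Fix a ball `B(x₀, r)`.

* The Poincaré inequality makes `X` uniformly locally connected
  (`exists_uniform_local_connectedness`). The indicator of a relatively clopen part of a closed
  ball has an upper gradient that vanishes in the ball, so by the Poincaré inequality it is
  constant near the centre; and the component of a point in a compact space is the intersection
  of its clopen neighbourhoods.
* Consequently every ray from the closed ball that leaves all bounded sets determines an end whose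
  compact sets are closed balls of radii `r`, `r + 1`, … (`exists_end_of_escaping`); uniform local
  connectedness gives the positive distance between `X ∖ F_j` and `F_{j+1}`. As there are only
  finitely many ends and all are parabolic, a maximum of finitely many densities is a density `h`
  of small energy that is admissible for all escaping rays (`exists_admissible_escaping`).
* By Vitali–Carathéodory, `h` may be taken lower semicontinuous and positive. A limit of ever
  longer curves of `h`-length at most `1/2` would, by Arzelà–Ascoli and Fatou, be a ray of
  `h`-length at most `1/2`; such a ray escapes, as `h` is bounded below on compact sets, which
  contradicts admissibility. So curves from the ball of `h`-length at most `1/2` have bounded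
  length (`exists_length_bound`).
* Hence the `h`-distance to the ball is at least `1/2` outside some larger ball, and by the same
  compactness its truncation at `1/2` is lower semicontinuous, in particular Borel. Rescaling it
  gives a condenser potential with upper gradient `2h` (`exists_relCap_le`), so the capacities
  tend to `0`.
-/

open MeasureTheory Metric Set Filter
open scoped ENNReal NNReal Topology

/-- `g` is an upper gradient of `u`: for every `L ≥ 0` and every `1`-Lipschitz curve
`γ : [0,L] → X`, one has `|u(γ L) - u(γ 0)| ≤ ∫₀^L g(γ t) dt`. -/
def IsUpperGradient {X : Type*} [MetricSpace X] (g : X → ℝ≥0∞) (u : X → ℝ) : Prop :=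
  ∀ (L : ℝ) (γ : ℝ → X), 0 ≤ L → LipschitzOnWith 1 γ (Set.Icc 0 L) →
    ENNReal.ofReal |u (γ L) - u (γ 0)| ≤ ∫⁻ t in Set.Icc 0 L, g (γ t)

/-- `(X,d,μ)` is of uniformly locally `p`-controlled geometry: there are `R₀ ∈ (0,∞]`,
`C_d ≥ 1`, `C, λ > 0` such that the measure is doubling and a `p`-Poincaré inequality holds
at all scales `0 < r < R₀`. -/
def UniformlyLocallyControlledGeometry {X : Type*} [MetricSpace X] [MeasurableSpace X]
    (p : ℝ) (μ : Measure X) : Prop :=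
  ∃ (R₀ : ℝ≥0∞) (Cd C lam : ℝ), 0 < R₀ ∧ 1 ≤ Cd ∧ 0 < C ∧ 0 < lam ∧
    (∀ (x : X) (r : ℝ), 0 < r → ENNReal.ofReal r < R₀ →
      μ (ball x (2 * r)) ≤ ENNReal.ofReal Cd * μ (ball x r)) ∧
    (∀ (u : X → ℝ) (g : X → ℝ≥0∞), LocallyIntegrable u μ → Measurable g →
      IsUpperGradient g u → ∀ (x : X) (r : ℝ), 0 < r → ENNReal.ofReal r < R₀ →
      ENNReal.ofReal (⨍ y in ball x r, |u y - ⨍ z in ball x r, u z ∂μ| ∂μ) ≤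
        ENNReal.ofReal (C * r) *
          ((∫⁻ y in ball x (lam * r), g y ^ p ∂μ) / μ (ball x (lam * r))) ^ (1 / p))

/-- The relative `p`-capacity of the condenser `(E,F)`: the infimum of `∫ gᵖ dμ` over all
`p`-integrable measurable `u` with `u ≥ 1` on `E`, `u ≤ 0` on `F`, and all upper gradients
`g` of `u`. -/
noncomputable def relCap {X : Type*} [MetricSpace X] [MeasurableSpace X]
    (p : ℝ) (μ : Measure X) (E F : Set X) : ℝ≥0∞ :=
  ⨅ (u : X → ℝ) (g : X → ℝ≥0∞) (_ : Measurable u)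
    (_ : (∫⁻ x, ENNReal.ofReal |u x| ^ p ∂μ) < ⊤)
    (_ : ∀ x ∈ E, 1 ≤ u x) (_ : ∀ x ∈ F, u x ≤ 0)
    (_ : Measurable g) (_ : IsUpperGradient g u), ∫⁻ x, g x ^ p ∂μ

/-- `X` is `p`-parabolic: for every base ball, the relative `p`-capacity to the complement of
`B(x₀,R)` tends to `0` as `R → ∞`. -/
def IsPParabolic {X : Type*} [MetricSpace X] [MeasurableSpace X]
    (p : ℝ) (μ : Measure X) : Prop :=
  ∀ (x₀ : X) (r : ℝ), 0 < r →
    Tendsto (fun R : ℝ => relCap p μ (ball x₀ r) ((ball x₀ R)ᶜ)) atTop (𝓝 0)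

/-- `(F_j)` is an end at infinity of `X` with associated compact sets `(K_j)`. -/
def IsEndWithCompacts {X : Type*} [MetricSpace X] (F K : ℕ → Set X) : Prop :=
  (∀ j, closure (F (j + 1)) ⊆ F j) ∧
  (∀ j, ∃ ε : ℝ, 0 < ε ∧ ∀ x ∈ (F j)ᶜ, ∀ y ∈ F (j + 1), ε ≤ dist x y) ∧
  (⋂ j, F j) = ∅ ∧
  (∀ j, IsCompact (K j) ∧ ¬ Bornology.IsBounded (F j) ∧
    ∃ x ∈ F j, F j = connectedComponentIn (K j)ᶜ x)

/-- Two ends are the same if each is eventually contained in the other. -/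
def SameEnd {X : Type*} (E F : ℕ → Set X) : Prop :=
  ∀ j, (∃ i, E i ⊆ F j) ∧ (∃ k, F k ⊆ E j)

/-- The `p`-modulus of a family `Γ` of maps `γ : [0,∞) → X`: the infimum of `∫ hᵖ dμ` over all
Borel `h : X → [0,∞]` with `∫_{[0,∞)} h(γ(t)) dt ≥ 1` for every `γ ∈ Γ`. -/
noncomputable def RayModulus {X : Type*} [MeasurableSpace X] (p : ℝ) (μ : Measure X)
    (Γ : Set (ℝ → X)) : ℝ≥0∞ :=
  ⨅ (h : X → ℝ≥0∞) (_ : Measurable h)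
    (_ : ∀ γ ∈ Γ, 1 ≤ ∫⁻ t in Set.Ici (0 : ℝ), h (γ t)), ∫⁻ x, h x ^ p ∂μ

/-- The family `Γ_j` of `1`-Lipschitz rays starting in `K₁` that eventually stay in `F_j`. -/
def EndRayFamily {X : Type*} [MetricSpace X] (K₁ Fj : Set X) : Set (ℝ → X) :=
  {γ : ℝ → X | LipschitzOnWith 1 γ (Set.Ici 0) ∧ γ 0 ∈ K₁ ∧
    ∃ τ : ℝ, 0 < τ ∧ ∀ t : ℝ, τ < t → γ t ∈ Fj}

/-- The end `(F_j)` (with compacta `(K_j)`) is `p`-hyperbolic: `lim_j Mod_p(Γ_j) > 0`. -/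
def IsPHyperbolicEnd {X : Type*} [MetricSpace X] [MeasurableSpace X] (p : ℝ) (μ : Measure X)
    (F K : ℕ → Set X) : Prop :=
  0 < Filter.liminf (fun j : ℕ => RayModulus p μ (EndRayFamily (K 0) (F j))) Filter.atTop

/-! ### Compactness of families of `1`-Lipschitz curves -/

/-- Arzelà–Ascoli for `1`-Lipschitz curves issuing from a compact set, in sequential form. -/
lemma exists_subseq_tendsto_lipschitz {X : Type*} [MetricSpace X] [ProperSpace X]
    {K : Set X} (hK : IsCompact K) (f : ℕ → ℝ → X) (hf : ∀ k, LipschitzWith 1 (f k))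
    (h0 : ∀ k, f k 0 ∈ K) :
    ∃ (F : ℝ → X) (φ : ℕ → ℕ), LipschitzWith 1 F ∧ F 0 ∈ K ∧ StrictMono φ ∧
      ∀ t, Tendsto (fun k => f (φ k) t) atTop (𝓝 (F t)) := by
  let P : Set (ℝ → X) := {g | LipschitzWith 1 g ∧ g 0 ∈ K}
  have hPc : IsCompact P := by
    have hsub : P ⊆ Set.pi univ (fun t : ℝ => cthickening |t| K) := by
      rintro g ⟨hg, hg0⟩ t -
      refine mem_cthickening_of_dist_le _ (g 0) _ _ hg0 ?_
      have := hg.dist_le_mul t 0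
      simpa [Real.dist_eq] using this
    refine (isCompact_univ_pi fun t : ℝ => hK.cthickening).of_isClosed_subset ?_ hsub
    have h1 : IsClosed {g : ℝ → X | LipschitzWith 1 g} := by
      have : {g : ℝ → X | LipschitzWith 1 g} =
          ⋂ (s : ℝ), ⋂ (t : ℝ), {g | dist (g s) (g t) ≤ dist s t} := by
        ext g
        simp [lipschitzWith_iff_dist_le_mul]
      rw [this]
      refine isClosed_iInter fun s => isClosed_iInter fun t => isClosed_le ?_ continuous_const
      exact (continuous_apply s).dist (continuous_apply t)
    exact h1.inter (hK.isClosed.preimage (continuous_apply (0 : ℝ)))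
  let S : Set C(ℝ, X) := {g | LipschitzWith 1 g ∧ g 0 ∈ K}
  have himg : ContinuousMap.toFun '' S = P := by
    ext g
    constructor
    · rintro ⟨g, hg, rfl⟩
      exact hg
    · intro hg
      exact ⟨⟨g, hg.1.continuous⟩, hg, rfl⟩
  have hSc : IsCompact S := by
    refine ArzelaAscoli.isCompact_of_equicontinuous S (himg ▸ hPc) ?_
    refine UniformEquicontinuous.equicontinuous ?_
    exact LipschitzWith.uniformEquicontinuous _ 1 (fun g => g.2.1)
  obtain ⟨F, hF, φ, hφ, hlim⟩ := hSc.tendsto_subseq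
    (x := fun k => (⟨f k, (hf k).continuous⟩ : C(ℝ, X))) (fun k => ⟨hf k, h0 k⟩)
  refine ⟨F, φ, hF.1, hF.2, hφ, fun t => ?_⟩
  exact ((continuous_eval_const t).tendsto F).comp hlim

/-- Fatou's lemma for line integrals of a lower semicontinuous density. -/
lemma lintegral_curve_le_of_tendsto {X : Type*} [MetricSpace X] [MeasurableSpace X]
    [BorelSpace X] {h : X → ℝ≥0∞} (hl : LowerSemicontinuous h) {f : ℕ → ℝ → X}
    (hf : ∀ k, Continuous (f k)) {F : ℝ → X}
    (hlim : ∀ t, Tendsto (fun k => f k t) atTop (𝓝 (F t)))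
    {A : Set ℝ} (hA : MeasurableSet A) {B : ℕ → Set ℝ} (hB : ∀ k, MeasurableSet (B k))
    (hAB : ∀ t ∈ A, ∀ᶠ k in atTop, t ∈ B k) {s : ℝ≥0∞}
    (hs : ∀ k, ∫⁻ t in B k, h (f k t) ≤ s) :
    ∫⁻ t in A, h (F t) ≤ s := by
  have hmeas : ∀ k, Measurable (fun t => h (f k t)) := fun k =>
    hl.measurable.comp (hf k).measurable
  calc ∫⁻ t in A, h (F t)
      ≤ ∫⁻ t in A, liminf (fun k => (B k).indicator (fun t => h (f k t)) t) atTop := by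
        refine setLIntegral_mono' hA fun t ht => ?_
        have h1 : h (F t) ≤ liminf (fun k => h (f k t)) atTop :=
          (hl.le_liminf (F t)).trans
            (by
              have := Filter.liminf_le_liminf_of_le (u := h) (hlim t)
              simpa [Filter.liminf, Filter.map_map, Function.comp_def] using this)
        refine h1.trans_eq (Filter.liminf_congr ?_)
        filter_upwards [hAB t ht] with k hk
        rw [indicator_of_mem hk]
    _ ≤ liminf (fun k => ∫⁻ t in A, (B k).indicator (fun t => h (f k t)) t) atTop :=
        lintegral_liminf_le fun k => (hmeas k).indicator (hB k)
    _ ≤ liminf (fun _ : ℕ => s) atTop := by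
        refine Filter.liminf_le_liminf (Eventually.of_forall fun k => ?_)
        refine (setLIntegral_le_lintegral A _).trans ?_
        rw [lintegral_indicator (hB k)]
        exact hs k
    _ = s := by simp

/-- A ray of finite `h`-length leaves every compact set for good if `h` is positive and lower
semicontinuous: each return to a ball costs a fixed amount of `h`-length. -/
lemma escapes_of_lintegral_ne_top {X : Type*} [MetricSpace X] [ProperSpace X]
    {h : X → ℝ≥0∞} (hl : LowerSemicontinuous h)
    (hpos : ∀ x, 0 < h x) {F : ℝ → X} (hF : LipschitzWith 1 F)
    (hfin : ∫⁻ t in Ici (0 : ℝ), h (F t) ≠ ⊤) (x₀ : X) (R : ℝ) :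
    ∃ T, 0 ≤ T ∧ ∀ t, T ≤ t → R < dist (F t) x₀ := by
  rcases (closedBall x₀ (R + 1)).eq_empty_or_nonempty with he | hne
  · refine ⟨0, le_rfl, fun t _ => ?_⟩
    by_contra hc
    have : F t ∈ closedBall x₀ (R + 1) := by
      rw [mem_closedBall]; linarith
    simp [he] at this
  obtain ⟨a, -, ha⟩ := (hl.lowerSemicontinuousOn _).exists_isMinOn hne
    (isCompact_closedBall x₀ (R + 1))
  have hc : 0 < h a := hpos a
  have htail : Tendsto (fun n : ℕ => ∫⁻ t in Ici (n : ℝ), h (F t)) atTop (𝓝 0) := by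
    have h1 := tendsto_measure_iInter_atTop
      (μ := (volume.restrict (Ici (0 : ℝ))).withDensity (fun t => h (F t)))
      (s := fun n : ℕ => Ici (n : ℝ)) (fun n => measurableSet_Ici.nullMeasurableSet)
      (fun m n hmn => Ici_subset_Ici.2 (by exact_mod_cast hmn))
      ⟨0, by
        rw [withDensity_apply _ measurableSet_Ici, Measure.restrict_restrict measurableSet_Ici]
        simpa using hfin⟩
    have h2 : (⋂ n : ℕ, Ici (n : ℝ)) = ∅ := by
      ext t
      simp only [mem_iInter, mem_Ici, mem_empty_iff_false, iff_false, not_forall, not_le]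
      exact exists_nat_gt t
    rw [h2, measure_empty] at h1
    refine h1.congr fun n => ?_
    simp only [Function.comp]
    rw [withDensity_apply _ measurableSet_Ici, Measure.restrict_restrict measurableSet_Ici,
      inter_eq_left.2 (Ici_subset_Ici.2 (Nat.cast_nonneg n))]
  obtain ⟨n, hn⟩ := (htail.eventually (gt_mem_nhds hc)).exists
  refine ⟨n, Nat.cast_nonneg n, fun t ht => ?_⟩
  by_contra hR
  rw [not_lt] at hR
  refine absurd hn (not_lt.2 ?_)
  calc h a = ∫⁻ _ in Icc t (t + 1), h a := by simp
    _ ≤ ∫⁻ s in Icc t (t + 1), h (F s) := by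
        refine setLIntegral_mono' measurableSet_Icc fun s hs => ha ?_
        have h3 := hF.dist_le_mul s t
        rw [Real.dist_eq, abs_of_nonneg (by linarith [hs.1])] at h3
        have h4 := dist_triangle (F s) (F t) x₀
        simp only [NNReal.coe_one, one_mul] at h3
        show F s ∈ closedBall x₀ (R + 1)
        rw [mem_closedBall]
        linarith [hs.2]
    _ ≤ ∫⁻ s in Ici (n : ℝ), h (F s) :=
        lintegral_mono_set fun s hs => ht.trans hs.1

/-- The key compactness statement: if every escaping ray from `K` has `h`-length at least `1`,
then curves from `K` of `h`-length at most `s < 1` have uniformly bounded parameter length.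
Otherwise a limit of ever longer such curves would be an escaping ray of `h`-length at most
`s`. -/
lemma exists_length_bound {X : Type*} [MetricSpace X] [MeasurableSpace X] [BorelSpace X]
    [ProperSpace X] {K : Set X} (hK : IsCompact K) {h : X → ℝ≥0∞} (hl : LowerSemicontinuous h)
    (hpos : ∀ x, 0 < h x) (x₀ : X)
    (hadm : ∀ F : ℝ → X, LipschitzWith 1 F → F 0 ∈ K →
      (∀ R : ℝ, ∃ T, 0 ≤ T ∧ ∀ t, T ≤ t → R < dist (F t) x₀) →
      1 ≤ ∫⁻ t in Ici (0 : ℝ), h (F t))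
    {s : ℝ≥0∞} (hs : s < 1) :
    ∃ T : ℝ, ∀ (f : ℝ → X) (L : ℝ), LipschitzWith 1 f → f 0 ∈ K →
      ∫⁻ t in Icc 0 L, h (f t) ≤ s → L ≤ T := by
  by_contra! hcon
  choose f L hf h0 hint hL using fun k : ℕ => hcon k
  obtain ⟨F, φ, hF, hF0, hφ, hlim⟩ := exists_subseq_tendsto_lipschitz hK f hf h0
  have hle : ∫⁻ t in Ici (0 : ℝ), h (F t) ≤ s := by
    refine lintegral_curve_le_of_tendsto hl (fun k => (hf (φ k)).continuous) hlim
      measurableSet_Ici (B := fun k => Icc 0 (L (φ k))) (fun k => measurableSet_Icc) ?_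
      (fun k => hint (φ k))
    intro t ht
    obtain ⟨N, hN⟩ := exists_nat_gt t
    filter_upwards [eventually_ge_atTop N] with k hk
    refine ⟨ht, ?_⟩
    have h1 : (N : ℝ) ≤ φ k := by exact_mod_cast hk.trans (hφ.id_le k)
    linarith [hL (φ k)]
  have hfin : ∫⁻ t in Ici (0 : ℝ), h (F t) ≠ ⊤ :=
    (hle.trans_lt (hs.trans ENNReal.one_lt_top)).ne
  have := hadm F hF hF0 (fun R => escapes_of_lintegral_ne_top hl hpos hF hfin x₀ R)
  exact absurd (this.trans hle) (not_le.2 hs)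

/-! ### The `h`-distance to a compact set -/

/-- The `h`-distance from `K` to `x`: the infimum of `∫₀^L h(f(t)) dt` over `1`-Lipschitz curves
`f` with `f 0 ∈ K` and `f L = x`. For convenience the curves are defined on all of `ℝ`, which is
no restriction since a curve on `[0,L]` extends by constants. -/
noncomputable def curveDist {X : Type*} [MetricSpace X] (K : Set X) (h : X → ℝ≥0∞) (x : X) :
    ℝ≥0∞ :=
  ⨅ (f : ℝ → X) (L : ℝ) (_ : LipschitzWith 1 f) (_ : 0 ≤ L) (_ : f 0 ∈ K) (_ : f L = x),
    ∫⁻ t in Icc 0 L, h (f t)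

lemma curveDist_le {X : Type*} [MetricSpace X] {K : Set X} (h : X → ℝ≥0∞) {f : ℝ → X} {L : ℝ}
    (hf : LipschitzWith 1 f) (hL : 0 ≤ L) (h0 : f 0 ∈ K) :
    curveDist K h (f L) ≤ ∫⁻ t in Icc 0 L, h (f t) :=
  iInf_le_of_le f <| iInf_le_of_le L <| iInf_le_of_le hf <| iInf_le_of_le hL <|
    iInf_le_of_le h0 <| iInf_le_of_le rfl le_rfl

lemma exists_curve_of_curveDist_lt {X : Type*} [MetricSpace X] {K : Set X} {h : X → ℝ≥0∞}
    {x : X} {s : ℝ≥0∞} (hx : curveDist K h x < s) :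
    ∃ (f : ℝ → X) (L : ℝ), LipschitzWith 1 f ∧ 0 ≤ L ∧ f 0 ∈ K ∧ f L = x ∧
      ∫⁻ t in Icc 0 L, h (f t) < s := by
  simp only [curveDist, iInf_lt_iff] at hx
  obtain ⟨f, L, hf, hL, h0, hx, hlt⟩ := hx
  exact ⟨f, L, hf, hL, h0, hx, hlt⟩

lemma curveDist_eq_zero {X : Type*} [MetricSpace X] {K : Set X} (h : X → ℝ≥0∞) {x : X}
    (hx : x ∈ K) : curveDist K h x = 0 := by
  have := curveDist_le (K := K) h (f := fun _ : ℝ => x) (L := 0)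
    (LipschitzWith.const' x) le_rfl hx
  simpa using this

/-- The constant extension of a `1`-Lipschitz curve on `[0,L]`. -/
lemma exists_lipschitz_extension {X : Type*} [MetricSpace X] {γ : ℝ → X} {L : ℝ} (hL : 0 ≤ L)
    (hγ : LipschitzOnWith 1 γ (Icc 0 L)) :
    ∃ f : ℝ → X, LipschitzWith 1 f ∧ ∀ t ∈ Icc 0 L, f t = γ t := by
  refine ⟨fun t => γ (projIcc 0 L hL t), ?_, fun t ht => ?_⟩
  · have h1 : LipschitzWith 1 ((Icc 0 L).domRestrict γ) := hγ.to_restrict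
    have h2 := h1.comp (LipschitzWith.projIcc hL)
    rw [mul_one] at h2
    exact h2
  · simp [projIcc_of_mem hL ht]

lemma lipschitz_concat {X : Type*} [MetricSpace X] {f g : ℝ → X} (hf : LipschitzWith 1 f)
    (hg : LipschitzWith 1 g) {a : ℝ} (hfg : f a = g 0) :
    LipschitzWith 1 (fun t => if t ≤ a then f t else g (t - a)) := by
  refine LipschitzWith.of_dist_le_mul fun s t => ?_
  wlog hst : s ≤ t generalizing s t
  · rw [dist_comm, dist_comm s t]
    exact this t s (le_of_not_ge hst)
  have hd : dist s t = t - s := by rw [Real.dist_eq, abs_sub_comm, abs_of_nonneg (by linarith)]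
  rw [hd, NNReal.coe_one, one_mul]
  by_cases ht : t ≤ a
  · have := hf.dist_le_mul s t
    rw [hd] at this
    simpa [ht, hst.trans ht] using this
  by_cases hs : s ≤ a
  · simp only [hs, ht, if_true, if_false]
    have h1 := hf.dist_le_mul s a
    have h2 := hg.dist_le_mul 0 (t - a)
    rw [Real.dist_eq, abs_sub_comm, abs_of_nonneg (by linarith)] at h1
    rw [Real.dist_eq, abs_sub_comm, abs_of_nonneg (by linarith)] at h2
    have h3 := dist_triangle (f s) (f a) (g (t - a))
    rw [NNReal.coe_one, one_mul] at h1 h2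
    rw [hfg] at h1 h3
    linarith
  · have := hg.dist_le_mul (s - a) (t - a)
    rw [dist_sub_right, hd] at this
    simpa [hs, ht] using this

/-- Appending a curve changes the `h`-distance by at most the `h`-length of that curve. -/
lemma curveDist_le_add {X : Type*} [MetricSpace X] {K : Set X} {h : X → ℝ≥0∞} {g : ℝ → X}
    {L : ℝ} (hg : LipschitzWith 1 g) (hL : 0 ≤ L) :
    curveDist K h (g L) ≤ curveDist K h (g 0) + ∫⁻ t in Icc 0 L, h (g t) := by
  refine ENNReal.le_of_forall_pos_le_add fun ε hε hfin => ?_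
  have hlt : curveDist K h (g 0) < curveDist K h (g 0) + ε :=
    ENNReal.lt_add_right (ne_top_of_le_ne_top hfin.ne le_self_add) (by exact_mod_cast hε.ne')
  obtain ⟨f, a, hf, ha, h0, hfa, hint⟩ := exists_curve_of_curveDist_lt hlt
  have hc := lipschitz_concat hf hg hfa
  have h1 := curveDist_le (K := K) h hc (add_nonneg ha hL) (by simpa [ha] using h0)
  have h2 : (if a + L ≤ a then f (a + L) else g (a + L - a)) = g L := by
    split_ifs with hif
    · have : L = 0 := by linarith
      simp [this, hfa]
    · simp
  rw [h2] at h1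
  refine h1.trans ?_
  rw [← Icc_union_Ioc_eq_Icc ha (by linarith : a ≤ a + L)]
  refine (lintegral_union_le _ _ _).trans ?_
  have h3 : ∫⁻ t in Icc 0 a, h (if t ≤ a then f t else g (t - a)) =
      ∫⁻ t in Icc 0 a, h (f t) :=
    setLIntegral_congr_fun measurableSet_Icc fun t ht => by simp [ht.2]
  have h4 : ∫⁻ t in Ioc a (a + L), h (if t ≤ a then f t else g (t - a)) =
      ∫⁻ t in Ioc a (a + L), h (g (t - a)) :=
    setLIntegral_congr_fun measurableSet_Ioc fun t ht => by simp [not_le.2 ht.1]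
  have h5 : ∫⁻ t in Ioc a (a + L), h (g (t - a)) = ∫⁻ t in Ioc 0 L, h (g t) := by
    have := (measurePreserving_sub_right volume a).setLIntegral_comp_preimage_emb
      (measurableEmbedding_subRight a) (fun t => h (g t)) (Ioc 0 L)
    simpa [add_comm] using this
  rw [h3, h4, h5]
  calc _ ≤ (curveDist K h (g 0) + ε) + ∫⁻ t in Icc 0 L, h (g t) :=
        add_le_add hint.le (lintegral_mono_set Ioc_subset_Icc_self)
    _ = _ := by ring

lemma curveDist_le_add' {X : Type*} [MetricSpace X] {K : Set X} {h : X → ℝ≥0∞} {g : ℝ → X}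
    {L : ℝ} (hg : LipschitzWith 1 g) (hL : 0 ≤ L) :
    curveDist K h (g 0) ≤ curveDist K h (g L) + ∫⁻ t in Icc 0 L, h (g t) := by
  have hr : LipschitzWith 1 (fun t => g (L - t)) :=
    LipschitzWith.of_dist_le_mul fun s t => by
      have h1 := hg.dist_le_mul (L - s) (L - t)
      rwa [Real.dist_eq (L - s), sub_sub_sub_cancel_left, ← Real.dist_eq, dist_comm t s] at h1
  have := curveDist_le_add (K := K) (h := h) hr hL
  have h5 : ∫⁻ t in Icc 0 L, h (g (L - t)) = ∫⁻ t in Icc 0 L, h (g t) := by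
    have := (Measure.measurePreserving_sub_left volume L).setLIntegral_comp_preimage_emb
      (measurableEmbedding_subLeft L) (fun t => h (g t)) (Icc 0 L)
    simpa using this
  simpa [h5] using this

/-- Truncated at a level `s` for which the curves from `K` of `h`-length at most `s` have bounded
length, the `h`-distance is lower semicontinuous: near-optimal curves subconverge. -/
lemma lowerSemicontinuous_min_curveDist {X : Type*} [MetricSpace X] [MeasurableSpace X]
    [BorelSpace X] [ProperSpace X] {K : Set X} (hK : IsCompact K) {h : X → ℝ≥0∞}
    (hl : LowerSemicontinuous h) {s : ℝ≥0∞} {T : ℝ}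
    (hT : ∀ (f : ℝ → X) (L : ℝ), LipschitzWith 1 f → f 0 ∈ K →
      ∫⁻ t in Icc 0 L, h (f t) ≤ s → L ≤ T) :
    LowerSemicontinuous (fun x => min (curveDist K h x) s) := by
  rw [lowerSemicontinuous_iff_isClosed_preimage]
  intro y
  rcases le_or_gt s y with hsy | hys
  · have : (fun x => min (curveDist K h x) s) ⁻¹' Iic y = univ := by
      ext x; simp [hsy]
    rw [this]; exact isClosed_univ
  refine IsSeqClosed.isClosed fun x z hx hz => ?_
  simp only [mem_preimage, mem_Iic, min_le_iff, not_le.2 hys, or_false] at hx ⊢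
  refine le_of_forall_gt_imp_ge_of_dense fun b hb => ?_
  choose f L hf hL h0 hfx hint using fun k =>
    exists_curve_of_curveDist_lt ((hx k).trans_lt (lt_min hb hys))
  obtain ⟨F, φ, hF, hF0, hφ, hlim⟩ := exists_subseq_tendsto_lipschitz hK f hf h0
  obtain ⟨L₀, hL₀, ψ, hψ, hLlim⟩ := (isCompact_Icc (a := (0 : ℝ)) (b := T)).tendsto_subseq
    (x := fun k => L (φ k))
    (fun k => ⟨hL _, hT _ _ (hf _) (h0 _) ((hint _).le.trans (min_le_right _ _))⟩)
  have hFz : F L₀ = z := by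
    refine tendsto_nhds_unique (f := fun k => f (φ (ψ k)) (L (φ (ψ k)))) (l := atTop) ?_ ?_
    · rw [tendsto_iff_dist_tendsto_zero]
      have h1 := (tendsto_iff_dist_tendsto_zero.1 hLlim).add
        (tendsto_iff_dist_tendsto_zero.1 ((hlim L₀).comp hψ.tendsto_atTop))
      rw [add_zero] at h1
      refine squeeze_zero (fun _ => dist_nonneg) (fun k => ?_) h1
      refine (dist_triangle _ (f (φ (ψ k)) L₀) _).trans (add_le_add ?_ le_rfl)
      simpa using (hf (φ (ψ k))).dist_le_mul (L (φ (ψ k))) L₀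
    · simp only [hfx]
      exact hz.comp ((hφ.comp hψ).tendsto_atTop)
  rw [← hFz]
  refine (curveDist_le h hF hL₀.1 hF0).trans ?_
  rw [← restrict_Ico_eq_restrict_Icc]
  refine lintegral_curve_le_of_tendsto hl (fun k => (hf (φ (ψ k))).continuous)
    (fun t => (hlim t).comp hψ.tendsto_atTop) measurableSet_Ico
    (B := fun k => Icc 0 (L (φ (ψ k)))) (fun k => measurableSet_Icc) ?_
    (fun k => (hint _).le.trans (min_le_left _ _))
  intro t ht
  filter_upwards [hLlim.eventually (lt_mem_nhds ht.2)] with k hk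
  exact ⟨ht.1, hk.le⟩

/-! ### Uniform local connectedness from the Poincaré inequality -/

/-- If a `1`-Lipschitz curve leaves a closed ball, it spends positive time outside it; if it stays
in the ball, its image cannot cross between the parts of a clopen partition of the ball. Hence the
indicator of a relatively clopen part `W` of a closed ball has an upper gradient vanishing in the
ball. -/
lemma isUpperGradient_indicator {X : Type*} [MetricSpace X] {x : X} {ρ : ℝ} {W : Set X}
    (hW : ∃ V : Set (closedBall x ρ), IsClopen V ∧ W = Subtype.val '' V) :
    IsUpperGradient ((closedBall x ρ)ᶜ.indicator (fun _ => ⊤)) (W.indicator (fun _ => (1 : ℝ))) := by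
  obtain ⟨V, hV, rfl⟩ := hW
  intro L γ hL hγ
  obtain ⟨f, hf, hfγ⟩ := exists_lipschitz_extension hL hγ
  have hint : ∫⁻ t in Icc 0 L, (closedBall x ρ)ᶜ.indicator (fun _ => (⊤ : ℝ≥0∞)) (γ t) =
      ∫⁻ t in Icc 0 L, (closedBall x ρ)ᶜ.indicator (fun _ => (⊤ : ℝ≥0∞)) (f t) :=
    setLIntegral_congr_fun measurableSet_Icc fun t ht => by simp only [hfγ t ht]
  rw [hint, ← hfγ L (right_mem_Icc.2 hL), ← hfγ 0 (left_mem_Icc.2 hL)]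
  by_cases hstay : ∀ t ∈ Icc 0 L, f t ∈ closedBall x ρ
  · -- the curve stays in the ball, so it stays on one side of the partition
    have hpre : IsPreconnected ((Subtype.val : closedBall x ρ → X) ⁻¹' (f '' Icc 0 L)) := by
      refine Topology.IsInducing.subtypeVal.isPreconnected_image.mp ?_
      rw [Subtype.image_preimage_coe, inter_eq_right.2 (by rintro _ ⟨t, ht, rfl⟩; exact hstay t ht)]
      exact isPreconnected_Icc.image f hf.continuous.continuousOn
    have h0 := hstay 0 (left_mem_Icc.2 hL)
    have h1 := hstay L (right_mem_Icc.2 hL)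
    have m0 : (⟨f 0, h0⟩ : closedBall x ρ) ∈
        (Subtype.val : closedBall x ρ → X) ⁻¹' (f '' Icc 0 L) :=
      ⟨0, left_mem_Icc.2 hL, rfl⟩
    have m1 : (⟨f L, h1⟩ : closedBall x ρ) ∈
        (Subtype.val : closedBall x ρ → X) ⁻¹' (f '' Icc 0 L) :=
      ⟨L, right_mem_Icc.2 hL, rfl⟩
    have hiff : f 0 ∈ Subtype.val '' V ↔ f L ∈ Subtype.val '' V := by
      simp only [Subtype.coe_image, mem_ofPred_eq, h0, h1, exists_true_left]
      exact ⟨fun h => hpre.subset_isClopen hV ⟨_, m0, h⟩ m1,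
        fun h => hpre.subset_isClopen hV ⟨_, m1, h⟩ m0⟩
    have : (Subtype.val '' V).indicator (fun _ => (1 : ℝ)) (f L) =
        (Subtype.val '' V).indicator (fun _ => (1 : ℝ)) (f 0) := by
      by_cases h : f 0 ∈ Subtype.val '' V
      · rw [indicator_of_mem h, indicator_of_mem (hiff.1 h)]
      · rw [indicator_of_notMem h, indicator_of_notMem (mt hiff.2 h)]
    simp [this]
  push Not at hstay
  obtain ⟨t, ht, hout⟩ := hstay
  rcases hL.eq_or_lt with h0 | h0
  · simp [← h0]
  have hO : IsOpen (f ⁻¹' (closedBall x ρ)ᶜ) := isClosed_closedBall.isOpen_compl.preimage hf.continuous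
  have hne : (f ⁻¹' (closedBall x ρ)ᶜ ∩ Ioo 0 L).Nonempty := by
    have hcl : t ∈ closure (Ioo 0 L) := by rwa [closure_Ioo h0.ne]
    exact mem_closure_iff.1 hcl _ hO hout
  have hvol : 0 < volume (f ⁻¹' (closedBall x ρ)ᶜ ∩ Ioo 0 L) :=
    (hO.inter isOpen_Ioo).measure_pos _ hne
  refine le_top.trans_eq (Eq.symm ?_)
  rw [eq_top_iff]
  calc (⊤ : ℝ≥0∞) = ⊤ * volume (f ⁻¹' (closedBall x ρ)ᶜ ∩ Ioo 0 L) := by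
        rw [ENNReal.top_mul hvol.ne']
    _ = ∫⁻ _ in f ⁻¹' (closedBall x ρ)ᶜ ∩ Ioo 0 L, ⊤ := by rw [setLIntegral_const]
    _ = ∫⁻ t in f ⁻¹' (closedBall x ρ)ᶜ ∩ Ioo 0 L,
          (closedBall x ρ)ᶜ.indicator (fun _ => (⊤ : ℝ≥0∞)) (f t) :=
        setLIntegral_congr_fun (hO.inter isOpen_Ioo).measurableSet fun s hs => by
          simp only [indicator_of_mem (show f s ∈ (closedBall x ρ)ᶜ from hs.1)]
    _ ≤ _ := lintegral_mono_set fun s hs => Ioo_subset_Icc_self hs.2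

/-- A small ball lies in a single connected component of a slightly larger closed ball: otherwise
the indicator of a relatively clopen part of the larger ball would violate the Poincaré
inequality. -/
lemma exists_uniform_local_connectedness {X : Type*} [MetricSpace X] [MeasurableSpace X]
    [BorelSpace X] [ProperSpace X] (μ : Measure X)
    (hball : ∀ (x : X) (r : ℝ), 0 < r → 0 < μ (ball x r) ∧ μ (ball x r) < ⊤)
    (p : ℝ) (hp : 1 ≤ p) (hgeom : UniformlyLocallyControlledGeometry p μ) :
    ∃ r : ℝ, 0 < r ∧ ∀ x : X, ∀ y ∈ ball x r, ∃ C : Set X, IsPreconnected C ∧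
      x ∈ C ∧ y ∈ C ∧ C ⊆ ball x 1 := by
  obtain ⟨R₀, Cd, C, lam, hR₀, -, -, hlam, -, hP⟩ := hgeom
  obtain ⟨r₁, hr₁, hr₁R⟩ : ∃ r₁ : ℝ, 0 < r₁ ∧ ENNReal.ofReal r₁ < R₀ := by
    obtain ⟨q, hq0, hq⟩ := ENNReal.lt_iff_exists_nnreal_btwn.1 hR₀
    exact ⟨q, by exact_mod_cast hq0, by simpa using hq⟩
  have hM : 0 < max lam 1 := lt_max_of_lt_right one_pos
  obtain ⟨r, hr, hrr₁, hrM⟩ : ∃ r : ℝ, 0 < r ∧ r ≤ r₁ ∧ max lam 1 * r < 1 := by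
    refine ⟨min r₁ (1 / (2 * max lam 1)), by positivity, min_le_left _ _, ?_⟩
    calc max lam 1 * min r₁ (1 / (2 * max lam 1))
        ≤ max lam 1 * (1 / (2 * max lam 1)) := by gcongr; exact min_le_right _ _
      _ = 1 / 2 := by field_simp
      _ < 1 := by norm_num
  refine ⟨r, hr, fun x y hy => ?_⟩
  set ρ := max lam 1 * r with hρ
  have hrρ : r ≤ ρ := le_mul_of_one_le_left hr.le (le_max_right _ _)
  have hxρ : x ∈ closedBall x ρ := mem_closedBall_self (hr.le.trans hrρ)
  have hyρ : y ∈ closedBall x ρ := ball_subset_closedBall (ball_subset_ball hrρ hy)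
  have : CompactSpace (closedBall x ρ) := isCompact_iff_compactSpace.1 (isCompact_closedBall x ρ)
  refine ⟨Subtype.val '' connectedComponent (⟨x, hxρ⟩ : closedBall x ρ),
    isPreconnected_connectedComponent.image _ continuous_subtype_val.continuousOn,
    ⟨_, mem_connectedComponent, rfl⟩, ⟨⟨y, hyρ⟩, ?_, rfl⟩, ?_⟩
  swap
  · rintro _ ⟨z, -, rfl⟩
    exact closedBall_subset_ball hrM z.2
  -- components of a compact Hausdorff space are intersections of clopen sets
  rw [connectedComponent_eq_iInter_isClopen, mem_iInter]
  rintro ⟨V, hV, hxV⟩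
  show (⟨y, hyρ⟩ : closedBall x ρ) ∈ V
  set W : Set X := Subtype.val '' V with hWdef
  have hWcl : IsClosed W :=
    isClosed_closedBall.isClosedEmbedding_subtypeVal.isClosedMap _ hV.isClosed
  obtain ⟨O, hO, hOV⟩ := isOpen_induced_iff.1 hV.isOpen
  have hOW : ∀ z ∈ ball x r, z ∈ O ↔ z ∈ W := fun z hz => by
    have hz' : z ∈ closedBall x ρ := ball_subset_closedBall (ball_subset_ball hrρ hz)
    rw [hWdef, ← hOV]
    simp [hz']
  have hug := isUpperGradient_indicator ⟨V, hV, hWdef⟩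
  have hfin : ∀ z s, μ (ball z s) < ⊤ := fun z s => by
    rcases le_or_gt s 0 with h | h
    · simp [ball_eq_empty.2 h]
    · exact (hball z s h).2
  have : IsLocallyFiniteMeasure μ := ⟨fun z => ⟨ball z 1, ball_mem_nhds z one_pos, hfin z 1⟩⟩
  have hloc : LocallyIntegrable (W.indicator (fun _ => (1 : ℝ))) μ :=
    (locallyIntegrable_const (1 : ℝ)).indicator hWcl.measurableSet
  have key := hP (W.indicator (fun _ => (1 : ℝ))) _ hloc
    (measurable_const.indicator isClosed_closedBall.isOpen_compl.measurableSet) hug x r hr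
    ((ENNReal.ofReal_le_ofReal hrr₁).trans_lt hr₁R)
  have hzero : ∫⁻ y in ball x (lam * r),
      (closedBall x ρ)ᶜ.indicator (fun _ => (⊤ : ℝ≥0∞)) y ^ p ∂μ = 0 := by
    rw [setLIntegral_congr_fun (g := fun _ => 0) measurableSet_ball fun z hz => ?_]
    · simp
    have hz' : z ∈ closedBall x ρ := by
      refine ball_subset_closedBall (ball_subset_ball ?_ hz)
      exact mul_le_mul_of_nonneg_right (le_max_left _ _) hr.le
    simp only
    rw [indicator_of_notMem (notMem_compl_iff.2 hz'), ENNReal.zero_rpow_of_pos (by linarith)]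
  rw [hzero, ENNReal.zero_div, ENNReal.zero_rpow_of_pos (by positivity), mul_zero,
    nonpos_iff_eq_zero, ENNReal.ofReal_eq_zero] at key
  set c := ⨍ z in ball x r, W.indicator (fun _ => (1 : ℝ)) z ∂μ with hc
  have hBfin : IsFiniteMeasure (μ.restrict (ball x r)) := ⟨by simpa using hfin x r⟩
  have hI : Integrable (fun y => |W.indicator (fun _ => (1 : ℝ)) y - c|) (μ.restrict (ball x r)) := by
    refine (Integrable.sub ?_ (integrable_const c)).abs
    exact (integrable_const (1 : ℝ)).indicator hWcl.measurableSet
  rw [setAverage_eq, smul_eq_mul] at key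
  have hpos : 0 < (μ.real (ball x r))⁻¹ :=
    inv_pos.2 (ENNReal.toReal_pos (hball x r hr).1.ne' (hfin x r).ne)
  have hint0 : ∫ y in ball x r, |W.indicator (fun _ => (1 : ℝ)) y - c| ∂μ = 0 :=
    le_antisymm (nonpos_of_mul_nonpos_right key hpos) (integral_nonneg fun _ => abs_nonneg _)
  have hae := (integral_eq_zero_iff_of_nonneg (fun _ => abs_nonneg _) hI).1 hint0
  -- a nonempty open subset of the small ball contains a point where the indicator equals `c`
  have hex : ∀ U : Set X, IsOpen U → (U ∩ ball x r).Nonempty →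
      ∃ z ∈ U ∩ ball x r, W.indicator (fun _ => (1 : ℝ)) z = c := by
    rintro U hU ⟨z, hz⟩
    obtain ⟨s, hs, hsub⟩ := Metric.isOpen_iff.1 (hU.inter isOpen_ball) z hz
    by_contra! hne
    have hnull : μ {z | ¬ (z ∈ ball x r → W.indicator (fun _ => (1 : ℝ)) z = c)} = 0 := by
      have := (ae_restrict_iff' measurableSet_ball).1 hae
      rw [ae_iff] at this
      convert this using 5
      simp [sub_eq_zero]
    refine (hball z s hs).1.ne' (measure_mono_null (fun w hw => ?_) hnull)
    exact fun h => hne w (hsub hw) (h (hsub hw).2)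
  obtain ⟨z₁, ⟨hz₁O, hz₁⟩, hz₁c⟩ := hex O hO
    ⟨x, (hOW x (mem_ball_self hr)).2 ⟨_, hxV, rfl⟩, mem_ball_self hr⟩
  rw [indicator_of_mem ((hOW _ hz₁).1 hz₁O)] at hz₁c
  have hyW : y ∈ W := by
    by_contra hyW
    obtain ⟨z₂, ⟨hz₂W, -⟩, hz₂c⟩ := hex Wᶜ hWcl.isOpen_compl ⟨y, hyW, hy⟩
    rw [indicator_of_notMem hz₂W] at hz₂c
    linarith
  obtain ⟨v, hv, rfl⟩ := hyW
  exact hv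

/-! ### The end determined by an escaping ray -/

/-- Every escaping ray determines an end, with respect to any exhaustion by closed balls of radii
`r`, `r + 1`, `r + 2`, …, such that a tail of the ray lies in each `F_j`. -/
lemma exists_end_of_escaping {X : Type*} [MetricSpace X] [ProperSpace X] {r₀ : ℝ} (hr₀ : 0 < r₀)
    (hconn : ∀ x : X, ∀ y ∈ ball x r₀, ∃ C : Set X, IsPreconnected C ∧
      x ∈ C ∧ y ∈ C ∧ C ⊆ ball x 1)
    (x₀ : X) (r : ℝ) {γ : ℝ → X} (hγ : Continuous γ)
    (hesc : ∀ R : ℝ, ∃ T, 0 ≤ T ∧ ∀ t, T ≤ t → R < dist (γ t) x₀) :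
    ∃ F : ℕ → Set X, IsEndWithCompacts F (fun j : ℕ => closedBall x₀ (r + j)) ∧
      ∀ j, ∃ T, 0 ≤ T ∧ ∀ t, T ≤ t → γ t ∈ F j := by
  choose T hT0 hT using fun j : ℕ => hesc (r + j)
  let K : ℕ → Set X := fun j => closedBall x₀ (r + j)
  let F : ℕ → Set X := fun j => connectedComponentIn (K j)ᶜ (γ (T j))
  have htail : ∀ j t, T j ≤ t → γ t ∈ F j := by
    intro j t ht
    have hpre : IsPreconnected (γ '' Ici (T j)) := isPreconnected_Ici.image γ hγ.continuousOn
    refine hpre.subset_connectedComponentIn ⟨_, self_mem_Ici, rfl⟩ ?_ ⟨t, ht, rfl⟩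
    rintro _ ⟨s, hs, rfl⟩
    simpa [K] using hT j s hs
  have hFK : ∀ j, F j ⊆ (K j)ᶜ := fun j => connectedComponentIn_subset _ _
  have hFpre : ∀ j, IsPreconnected (F j) := fun j => isPreconnected_connectedComponentIn
  -- a connected subset of the complement of `K j` meeting `F j` is contained in `F j`
  have habs : ∀ j (C : Set X), IsPreconnected C → C ⊆ (K j)ᶜ → (C ∩ F j).Nonempty → C ⊆ F j := by
    rintro j C hC hCK ⟨z, hzC, hzF⟩
    have h1 : F j = connectedComponentIn (K j)ᶜ z := connectedComponentIn_eq hzF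
    rw [h1]
    exact hC.subset_connectedComponentIn hzC hCK
  have hclos : ∀ j, closure (F (j + 1)) ⊆ F j := by
    intro j
    refine habs j _ (hFpre (j + 1)).closure (fun z hz hzK => ?_)
      ⟨γ (max (T j) (T (j + 1))), subset_closure (htail _ _ (le_max_right _ _)),
        htail _ _ (le_max_left _ _)⟩
    have h1 : closure (F (j + 1)) ⊆ {w | r + (j + 1 : ℕ) ≤ dist w x₀} := by
      refine closure_minimal (fun w hw => ?_)
        (isClosed_le continuous_const (continuous_id.dist continuous_const))
      have := hFK _ hw
      simp only [K, mem_compl_iff, mem_closedBall, not_le] at this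
      exact this.le
    have h2 := h1 hz
    have h3 : dist z x₀ ≤ r + j := hzK
    simp only [mem_ofPred_eq] at h2
    push_cast at h2
    linarith
  refine ⟨F, ⟨hclos, fun j => ⟨r₀, hr₀, fun x hx y hy => ?_⟩, ?_, fun j =>
    ⟨isCompact_closedBall _ _, ?_, γ (T j), htail _ _ le_rfl, rfl⟩⟩,
    fun j => ⟨T j, hT0 j, htail j⟩⟩
  · by_contra! hlt
    obtain ⟨C, hC, hyC, hxC, hCb⟩ := hconn y x hlt
    refine hx (habs j C hC (fun w hw hwK => ?_) ⟨y, hyC, hclos j (subset_closure hy)⟩ hxC)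
    have h1 := hFK _ hy
    simp only [K, mem_compl_iff, mem_closedBall, not_le] at h1
    push_cast at h1
    have h2 : dist w x₀ ≤ r + j := hwK
    have h3 : dist w y < 1 := hCb hw
    have h4 := dist_triangle y w x₀
    rw [dist_comm y w] at h4
    linarith
  · refine eq_empty_of_forall_notMem fun z hz => ?_
    obtain ⟨n, hn⟩ := exists_nat_gt (dist z x₀ - r)
    refine hFK n (mem_iInter.1 hz n) ?_
    show dist z x₀ ≤ r + n
    linarith
  · intro hb
    obtain ⟨R, hR⟩ := hb.subset_closedBall x₀
    obtain ⟨T', -, hT'⟩ := hesc R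
    have h1 := hR (htail j (max (T j) T') (le_max_left _ _))
    exact absurd (mem_closedBall.1 h1) (not_le.2 (hT' _ (le_max_right _ _)))

/-! ### Admissible densities -/

/-- For a parabolic end some `Γ_j` has an admissible density of small energy. -/
lemma exists_admissible_of_not_hyperbolic {X : Type*} [MetricSpace X] [MeasurableSpace X]
    {p : ℝ} {μ : Measure X} {F K : ℕ → Set X} (hpar : ¬ IsPHyperbolicEnd p μ F K) {ε : ℝ≥0∞}
    (hε : 0 < ε) :
    ∃ (j : ℕ) (h : X → ℝ≥0∞), Measurable h ∧
      (∀ γ ∈ EndRayFamily (K 0) (F j), 1 ≤ ∫⁻ t in Ici (0 : ℝ), h (γ t)) ∧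
      ∫⁻ x, h x ^ p ∂μ < ε := by
  by_contra! hcon
  refine hpar (hε.trans_le ?_)
  refine le_liminf_of_le (by isBoundedDefault) (Eventually.of_forall fun j => ?_)
  exact le_iInf fun h => le_iInf fun hm => le_iInf fun ha => hcon j h hm ha

/-- A density can be replaced by a larger, everywhere positive and lower semicontinuous one at an
arbitrarily small cost of energy. -/
lemma exists_lowerSemicontinuous_density {X : Type*} [MetricSpace X] [MeasurableSpace X]
    [BorelSpace X] {μ : Measure X} [SigmaFinite μ] [μ.WeaklyRegular] {p : ℝ} (hp : 0 < p)
    {h : X → ℝ≥0∞} (hm : Measurable h) {ε : ℝ≥0∞} (hε : ε ≠ 0) :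
    ∃ g : X → ℝ≥0∞, LowerSemicontinuous g ∧ (∀ x, 0 < g x) ∧ (∀ x, h x ≤ g x) ∧
      ∫⁻ x, g x ^ p ∂μ ≤ ∫⁻ x, h x ^ p ∂μ + ε := by
  have hε2 : ε / 2 ≠ 0 := (ENNReal.half_pos hε).ne'
  obtain ⟨w, hw0, hwm, hwε⟩ := exists_pos_lintegral_lt_of_sigmaFinite μ hε2
  obtain ⟨G, hGle, hGl, hGint⟩ := exists_le_lowerSemicontinuous_lintegral_ge μ
    (fun x => h x ^ p + w x) ((hm.pow_const p).add hwm.coe_nnreal_ennreal) hε2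
  have hip : 0 < 1 / p := by positivity
  refine ⟨fun x => G x ^ (1 / p), ?_, fun x => ?_, fun x => ?_, ?_⟩
  · exact (ENNReal.continuous_rpow_const (y := 1 / p)).comp_lowerSemicontinuous hGl
      (ENNReal.monotone_rpow_of_nonneg hip.le)
  · refine ENNReal.rpow_pos_of_nonneg ?_ hip.le
    refine lt_of_lt_of_le ?_ (hGle x)
    have hwx : (0 : ℝ≥0∞) < w x := by exact_mod_cast hw0 x
    exact hwx.trans_le le_add_self
  · rw [one_div, ENNReal.le_rpow_inv_iff hp]
    exact le_self_add.trans (hGle x)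
  · have : ∀ x, (G x ^ (1 / p)) ^ p = G x := fun x => by
      rw [← ENNReal.rpow_mul, one_div_mul_cancel hp.ne', ENNReal.rpow_one]
    simp only [this]
    refine hGint.trans ?_
    rw [lintegral_add_left (hm.pow_const p), add_assoc]
    gcongr
    exact (add_le_add hwε.le le_rfl).trans_eq (ENNReal.add_halves ε)

/-- A positive lower semicontinuous density admissible for the rays escaping from a closed ball
gives a condenser potential for that ball: truncate the `h`-distance to the ball at height `1/2`
and rescale. -/
lemma exists_relCap_le {X : Type*} [MetricSpace X] [MeasurableSpace X] [BorelSpace X]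
    [ProperSpace X] {μ : Measure X} (hfin : ∀ (x : X) (r : ℝ), μ (ball x r) < ⊤)
    {p : ℝ} (hp : 0 < p) (x₀ : X) (r : ℝ) {h : X → ℝ≥0∞} (hl : LowerSemicontinuous h)
    (hpos : ∀ x, 0 < h x)
    (hadm : ∀ F : ℝ → X, LipschitzWith 1 F → F 0 ∈ closedBall x₀ r →
      (∀ R : ℝ, ∃ T, 0 ≤ T ∧ ∀ t, T ≤ t → R < dist (F t) x₀) →
      1 ≤ ∫⁻ t in Ici (0 : ℝ), h (F t)) :
    ∃ R₁ : ℝ, ∀ R, R₁ ≤ R →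
      relCap p μ (ball x₀ r) (ball x₀ R)ᶜ ≤ 2 ^ p * ∫⁻ x, h x ^ p ∂μ := by
  set K := closedBall x₀ r with hKdef
  have hK : IsCompact K := isCompact_closedBall x₀ r
  obtain ⟨T, hT⟩ := exists_length_bound hK hl hpos x₀ hadm ENNReal.one_half_lt_one
  set v : X → ℝ≥0∞ := fun x => min (curveDist K h x) 2⁻¹ with hv
  have hvl : LowerSemicontinuous v := lowerSemicontinuous_min_curveDist hK hl hT
  have hvle : ∀ x, v x ≤ 2⁻¹ := fun x => min_le_right _ _
  have hvtop : ∀ x, v x ≠ ⊤ := fun x => ne_top_of_le_ne_top (by simp) (hvle x)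
  refine ⟨r + T + 1, fun R hR => ?_⟩
  have hfar : ∀ x ∈ (ball x₀ R)ᶜ, v x = 2⁻¹ := by
    intro x hx
    refine min_eq_right (le_of_not_gt fun hlt => ?_)
    obtain ⟨f, L, hf, hL, h0, rfl, hint⟩ := exists_curve_of_curveDist_lt hlt
    have h1 := hT f L hf h0 hint.le
    have h2 := hf.dist_le_mul L 0
    rw [Real.dist_eq, sub_zero, abs_of_nonneg hL, NNReal.coe_one, one_mul] at h2
    have h3 := dist_triangle (f L) (f 0) x₀
    have h4 : dist (f 0) x₀ ≤ r := h0
    have h5 : R ≤ dist (f L) x₀ := by simpa using hx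
    linarith
  set u : X → ℝ := fun x => 1 - 2 * (v x).toReal with hu
  have hvr : ∀ x, (v x).toReal ≤ 1 / 2 := fun x => by
    have := ENNReal.toReal_mono (by simp) (hvle x)
    simpa using this
  have hufar : ∀ x ∈ (ball x₀ R)ᶜ, u x = 0 := fun x hx => by
    simp [hu, hfar x hx]
  have hum : Measurable u := (hvl.measurable.ennreal_toReal.const_mul 2).const_sub 1
  have hcap : ∫⁻ x, (2 * h x) ^ p ∂μ = 2 ^ p * ∫⁻ x, h x ^ p ∂μ := by
    simp only [ENNReal.mul_rpow_of_nonneg _ _ hp.le]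
    rw [lintegral_const_mul _ (hl.measurable.pow_const p)]
  rw [← hcap]
  refine iInf_le_of_le u ?_
  refine iInf_le_of_le (fun x => 2 * h x) ?_
  refine iInf_le_of_le hum <| iInf_le_of_le ?_ <| iInf_le_of_le ?_ <|
    iInf_le_of_le (fun x hx => (hufar x hx).le) <|
    iInf_le_of_le (hl.measurable.const_mul 2) <| iInf_le_of_le ?_ le_rfl
  · calc ∫⁻ x, ENNReal.ofReal |u x| ^ p ∂μ ≤ ∫⁻ x, (ball x₀ R).indicator (fun _ => 1) x ∂μ := by
          refine lintegral_mono fun x => ?_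
          by_cases hx : x ∈ ball x₀ R
          · rw [indicator_of_mem hx]
            refine ENNReal.rpow_le_one ?_ hp.le
            rw [ENNReal.ofReal_le_one, abs_le]
            have h1 : 0 ≤ (v x).toReal := ENNReal.toReal_nonneg
            constructor <;> simp only [hu] <;> linarith [hvr x]
          · rw [hufar x hx]
            simp [ENNReal.zero_rpow_of_pos hp]
      _ < ⊤ := by
          rw [lintegral_indicator measurableSet_ball]
          simpa using hfin x₀ R
  · intro x hx
    have h0 : curveDist K h x = 0 := curveDist_eq_zero h (ball_subset_closedBall hx)
    have : v x = 0 := by simp [hv, h0]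
    simp [hu, this]
  · intro L γ hL hγ
    obtain ⟨f, hf, hfγ⟩ := exists_lipschitz_extension hL hγ
    have hint : ∫⁻ t in Icc 0 L, 2 * h (γ t) = 2 * ∫⁻ t in Icc 0 L, h (f t) := by
      have hmf : Measurable (fun t => h (f t)) := hl.measurable.comp hf.continuous.measurable
      rw [← lintegral_const_mul _ hmf]
      exact setLIntegral_congr_fun measurableSet_Icc fun t ht => by simp only [hfγ t ht]
    rw [hint, ← hfγ L (right_mem_Icc.2 hL), ← hfγ 0 (left_mem_Icc.2 hL)]
    set I := ∫⁻ t in Icc 0 L, h (f t) with hI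
    have hmin : ∀ a b : X, curveDist K h a ≤ curveDist K h b + I → v a ≤ v b + I := by
      intro a b hab
      rw [hv]
      simp only
      rw [min_add]
      exact le_min ((min_le_left _ _).trans hab) ((min_le_right _ _).trans le_self_add)
    have h1 := hmin _ _ (curveDist_le_add (K := K) (h := h) hf hL)
    have h2 := hmin _ _ (curveDist_le_add' (K := K) (h := h) hf hL)
    by_cases hItop : I = ⊤
    · simp [hItop]
    have h1' := ENNReal.toReal_mono (by simp [hItop, hvtop]) h1
    have h2' := ENNReal.toReal_mono (by simp [hItop, hvtop]) h2
    rw [ENNReal.toReal_add (hvtop _) hItop] at h1' h2'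
    have h3 : |u (f L) - u (f 0)| ≤ 2 * I.toReal := by
      rw [abs_le]
      constructor <;> simp only [hu] <;> linarith
    refine (ENNReal.ofReal_le_ofReal h3).trans_eq ?_
    rw [ENNReal.ofReal_mul two_pos.le, ENNReal.ofReal_toReal hItop]
    simp

/-! ### The two implications -/

/-- If `X` is parabolic, an upper gradient of a condenser potential is admissible for `Γ_j` once
`F_j` lies outside the condenser, so every end is parabolic. -/
lemma not_isPParabolic_of_hyperbolic_end {X : Type*} [MetricSpace X] [MeasurableSpace X]
    [ProperSpace X] {μ : Measure X} {p : ℝ} {F K : ℕ → Set X} (hE : IsEndWithCompacts F K)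
    (hhyp : IsPHyperbolicEnd p μ F K) : ¬ IsPParabolic p μ := by
  intro hpar
  obtain ⟨hclos, -, hinter, hcomp⟩ := hE
  obtain ⟨x₀, -, -⟩ := (hcomp 0).2.2
  obtain ⟨r, hr0, hr⟩ := (hcomp 0).1.isBounded.subset_ball_lt 0 x₀
  have hanti : Antitone F := antitone_nat_of_succ_le fun j => subset_closure.trans (hclos j)
  set m := liminf (fun j : ℕ => RayModulus p μ (EndRayFamily (K 0) (F j))) atTop with hm
  have hev := (hpar x₀ r hr0).eventually (gt_mem_nhds hhyp)
  obtain ⟨R, hR⟩ := hev.exists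
  simp only [relCap, iInf_lt_iff] at hR
  obtain ⟨u, g, -, -, hu1, hu0, hg, hug, hlt⟩ := hR
  -- the sets `F j` eventually avoid the closed ball of radius `R`
  obtain ⟨n, hn⟩ : ∃ n, closedBall x₀ R ∩ F n = ∅ := by
    have h1 := (isCompact_closedBall x₀ R).elim_directed_family_closed
      (fun j => closure (F (j + 1))) (fun j => isClosed_closure)
      (by
        refine subset_empty_iff.1 (inter_subset_right.trans ?_)
        rw [← hinter]
        exact iInter_mono fun j => hclos j)
      (directed_of_isDirected_le fun i j hij => closure_mono (hanti (by omega)))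
    obtain ⟨j, hj⟩ := h1
    exact ⟨j + 1, subset_empty_iff.1 ((inter_subset_inter_right _ subset_closure).trans_eq hj)⟩
  refine absurd hlt (not_lt.2 ?_)
  refine liminf_le_of_le (by isBoundedDefault) fun b hb => ?_
  obtain ⟨j, hj, hbj⟩ := (hb.and (eventually_ge_atTop n)).exists
  refine hj.trans (iInf_le_of_le g <| iInf_le_of_le hg <| iInf_le_of_le ?_ le_rfl)
  rintro γ ⟨hγ, hγ0, τ, hτ, hγτ⟩
  have h1 := hug (τ + 1) γ (by linarith) (hγ.mono Icc_subset_Ici_self)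
  have h2 : 1 ≤ u (γ 0) := hu1 _ (hr hγ0)
  have h3 : u (γ (τ + 1)) ≤ 0 := by
    refine hu0 _ fun hin => ?_
    have : γ (τ + 1) ∈ closedBall x₀ R ∩ F n :=
      ⟨ball_subset_closedBall hin, hanti hbj (hγτ _ (by linarith))⟩
    rw [hn] at this
    exact this
  calc (1 : ℝ≥0∞) = ENNReal.ofReal 1 := by simp
    _ ≤ ENNReal.ofReal |u (γ (τ + 1)) - u (γ 0)| := by
        refine ENNReal.ofReal_le_ofReal ?_
        rw [abs_sub_comm]
        exact le_trans (by linarith) (le_abs_self _)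
    _ ≤ ∫⁻ t in Icc 0 (τ + 1), g (γ t) := h1
    _ ≤ ∫⁻ t in Ici (0 : ℝ), g (γ t) := lintegral_mono_set Icc_subset_Ici_self

/-- With finitely many ends, all parabolic, the pointwise maximum of densities admissible for the
individual ends is admissible for all escaping rays and has small energy. -/
lemma exists_admissible_escaping {X : Type*} [MetricSpace X] [MeasurableSpace X]
    [ProperSpace X] {μ : Measure X} {p : ℝ} (hp : 0 < p) {r₀ : ℝ} (hr₀ : 0 < r₀)
    (hconn : ∀ x : X, ∀ y ∈ ball x r₀, ∃ C : Set X, IsPreconnected C ∧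
      x ∈ C ∧ y ∈ C ∧ C ⊆ ball x 1)
    {n : ℕ} {E : Fin n → ℕ → Set X}
    (hE : ∀ F K : ℕ → Set X, IsEndWithCompacts F K → ∃ i, SameEnd F (E i))
    (hpar : ∀ F K : ℕ → Set X, IsEndWithCompacts F K → ¬ IsPHyperbolicEnd p μ F K)
    (x₀ : X) (r : ℝ) {ε : ℝ≥0∞} (hε : 0 < ε) :
    ∃ h : X → ℝ≥0∞, Measurable h ∧
      (∀ γ : ℝ → X, LipschitzWith 1 γ → γ 0 ∈ closedBall x₀ r →
        (∀ R : ℝ, ∃ T, 0 ≤ T ∧ ∀ t, T ≤ t → R < dist (γ t) x₀) →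
        1 ≤ ∫⁻ t in Ici (0 : ℝ), h (γ t)) ∧
      ∫⁻ x, h x ^ p ∂μ ≤ ε := by
  -- `G i` represents the `i`-th end with `K₁` the closed ball, if it has such a representative
  have key : ∀ i : Fin n, ∃ (G : ℕ → Set X) (j : ℕ) (h : X → ℝ≥0∞), Measurable h ∧
      ∫⁻ x, h x ^ p ∂μ ≤ ε / n ∧
      ((∃ F, IsEndWithCompacts F (fun j : ℕ => closedBall x₀ (r + j)) ∧ SameEnd F (E i)) →
        SameEnd G (E i) ∧ ∀ γ ∈ EndRayFamily (closedBall x₀ r) (G j),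
          1 ≤ ∫⁻ t in Ici (0 : ℝ), h (γ t)) := by
    intro i
    have hεn : 0 < ε / n := ENNReal.div_pos hε.ne' (ENNReal.natCast_ne_top n)
    by_cases hex : ∃ F, IsEndWithCompacts F (fun j : ℕ => closedBall x₀ (r + j)) ∧
        SameEnd F (E i)
    · obtain ⟨G, hG, hGE⟩ := hex
      obtain ⟨j, h, hm, ha, hint⟩ := exists_admissible_of_not_hyperbolic (hpar G _ hG) hεn
      exact ⟨G, j, h, hm, hint.le, fun _ => ⟨hGE, by simpa using ha⟩⟩
    · exact ⟨fun _ => ∅, 0, 0, measurable_zero, by simp [ENNReal.zero_rpow_of_pos hp],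
        fun h => absurd h hex⟩
  choose G j h hm hint hadm using key
  refine ⟨fun x => ⨆ i, h i x, Measurable.iSup hm, fun γ hγ hγ0 hesc => ?_, ?_⟩
  · obtain ⟨F, hF, hFγ⟩ := exists_end_of_escaping hr₀ hconn x₀ r hγ.continuous hesc
    obtain ⟨i, hi⟩ := hE F _ hF
    obtain ⟨hGE, ha⟩ := hadm i ⟨F, hF, hi⟩
    have hmem : γ ∈ EndRayFamily (closedBall x₀ r) (G i (j i)) := by
      refine ⟨hγ.lipschitzOnWith, hγ0, ?_⟩
      obtain ⟨b, hb⟩ := (hGE (j i)).2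
      obtain ⟨a, ha⟩ := (hi b).1
      obtain ⟨T, hT0, hT⟩ := hFγ a
      exact ⟨T + 1, by linarith, fun t ht => hb (ha (hT t (by linarith)))⟩
    refine (ha γ hmem).trans (lintegral_mono fun t => le_iSup (fun i => h i (γ t)) i)
  · calc ∫⁻ x, (⨆ i, h i x) ^ p ∂μ ≤ ∫⁻ x, ∑ i, h i x ^ p ∂μ := by
          refine lintegral_mono fun x => ?_
          have h1 : (⨆ i, h i x) ^ p = ⨆ i, h i x ^ p := by
            have := (ENNReal.orderIsoRpow p hp).map_iSup (fun i => h i x)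
            simpa only [ENNReal.orderIsoRpow_apply] using this
          rw [h1]
          exact iSup_le fun i =>
            Finset.single_le_sum (f := fun i => h i x ^ p) (fun _ _ => zero_le) (Finset.mem_univ i)
      _ = ∑ i, ∫⁻ x, h i x ^ p ∂μ := lintegral_finsetSum _ fun i _ => (hm i).pow_const p
      _ ≤ ∑ _i : Fin n, ε / n := Finset.sum_le_sum fun i _ => hint i
      _ ≤ ε := by
          rw [Finset.sum_const, Finset.card_univ, Fintype.card_fin, nsmul_eq_mul]
          exact ENNReal.mul_div_le

/-- under the standing assumptions and uniformly locally `p`-controlled geometry: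
(i) if `X` has finitely many ends at infinity, all of which are `p`-parabolic, then `X` is
`p`-parabolic; (ii) if `X` has at least one `p`-hyperbolic end at infinity, then `X` is
`p`-hyperbolic. -/
theorem statement4 {X : Type*} [MetricSpace X] [MeasurableSpace X] [BorelSpace X]
    [ProperSpace X] [ConnectedSpace X]
    (μ : Measure X) (hXinf : μ Set.univ = ⊤)
    (hball : ∀ (x : X) (r : ℝ), 0 < r → 0 < μ (ball x r) ∧ μ (ball x r) < ⊤)
    (p : ℝ) (hp : 1 ≤ p)
    (hgeom : UniformlyLocallyControlledGeometry p μ) :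
    (((∃ (n : ℕ) (E KE : Fin n → ℕ → Set X),
        (∀ i, IsEndWithCompacts (E i) (KE i)) ∧
        (∀ F K : ℕ → Set X, IsEndWithCompacts F K → ∃ i, SameEnd F (E i))) ∧
      (∀ F K : ℕ → Set X, IsEndWithCompacts F K → ¬ IsPHyperbolicEnd p μ F K)) →
        IsPParabolic p μ) ∧
    ((∃ F K : ℕ → Set X, IsEndWithCompacts F K ∧ IsPHyperbolicEnd p μ F K) →
        ¬ IsPParabolic p μ) := by
  refine ⟨?_, fun ⟨F, K, hE, hhyp⟩ => not_isPParabolic_of_hyperbolic_end hE hhyp⟩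
  rintro ⟨⟨n, E, KE, -, hE⟩, hpar⟩ x₀ r hr
  have hp0 : 0 < p := one_pos.trans_le hp
  have hfin : ∀ z s, μ (ball z s) < ⊤ := fun z s => by
    rcases le_or_gt s 0 with h | h
    · simp [ball_eq_empty.2 h]
    · exact (hball z s h).2
  have : IsLocallyFiniteMeasure μ := ⟨fun z => ⟨ball z 1, ball_mem_nhds z one_pos, hfin z 1⟩⟩
  obtain ⟨r₀, hr₀, hconn⟩ := exists_uniform_local_connectedness μ hball p hp hgeom
  rw [ENNReal.tendsto_nhds_zero]
  intro ε hε
  -- the energy budget: the potential costs a factor `2 ^ p`, and the density is built in two steps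
  have h2p : (2 : ℝ≥0∞) ^ p ≠ ⊤ := ENNReal.rpow_ne_top_of_nonneg hp0.le (by simp)
  set δ := ε / 2 ^ p / 2 with hδ
  have hδ0 : 0 < δ := ENNReal.half_pos (ENNReal.div_pos hε.ne' h2p).ne'
  obtain ⟨h, hm, hadm, hint⟩ := exists_admissible_escaping (μ := μ) hp0 hr₀ hconn hE hpar x₀ r hδ0
  obtain ⟨g, hgl, hgpos, hhg, hgint⟩ := exists_lowerSemicontinuous_density (μ := μ) hp0 hm hδ0.ne'
  obtain ⟨R₁, hR₁⟩ := exists_relCap_le hfin hp0 x₀ r hgl hgpos fun F hF hF0 hesc =>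
    (hadm F hF hF0 hesc).trans (lintegral_mono fun t => hhg (F t))
  filter_upwards [eventually_ge_atTop R₁] with R hR
  calc relCap p μ (ball x₀ r) (ball x₀ R)ᶜ ≤ 2 ^ p * ∫⁻ x, g x ^ p ∂μ := hR₁ R hR
    _ ≤ 2 ^ p * (δ + δ) := by
        gcongr
        exact hgint.trans (add_le_add hint le_rfl)
    _ = 2 ^ p * (ε / 2 ^ p) := by rw [hδ, ENNReal.add_halves]
    _ ≤ ε := ENNReal.mul_div_le
end

section
/- Let 1 ≤ p < ∞, let (X,d,μ) satisfy the standing assumptions, be of uniformly locally p-controlled geometry, and support a global (p,p)-Sobolev inequality for compactly supported functions. Let f ∈ D^{1,p}(X). Then ∫_X |f|^p dμ < ∞ (i.e., f ∈ N^{1,p}(X)) if and only if Mod_p(Γ_f) = 0, where Γ_f is the family of all 1-Lipschitz maps γ : [0,∞) → X tending to ∞ for which f(γ(t)) does not converge to 0 as t → ∞. -/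
/-!
Write `g` for an upper gradient of `f` with `∫ g^p < ∞`, and `Γ` for the family of rays in question.

If `∫ |f|^p < ∞`, then `m = max |f| g` is in `L^p`. Along a ray on which `m` has finite integral `f`
tends to `0` (`tendsto_zero_of_lintegral_ne_top`), so `m` has infinite integral along every ray in
`Γ`, and `Γ` has zero modulus (`rayModulus_eq_zero_of_lintegral_eq_top`).

Conversely, let `Γ` have zero modulus, and fix `M ∈ ℕ`. Choose `h` admissible for `Γ` with
`∫ (M h)^p ≤ 1`, and a positive lower semicontinuous `ρ` that dominates `g` and `M h`, with `∫ ρ^p`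
bounded by a finite constant independent of `M` (`exists_lowerSemicontinuous_weight`). Let `d_R(x)`
be the least integral of `ρ` along a curve from `x` to the complement of `B(x₀,R)` (`exitCost`). The
function `u_R = min (|f|, M, d_R)` is bounded, vanishes outside `B(x₀,R)` and has upper gradient `ρ`,
and it is measurable because `d_R` is lower semicontinuous, by an Arzelà–Ascoli argument. The Sobolev
inequality therefore bounds `∫ u_R^p` by a multiple of `∫ ρ^p` (`lintegral_min_rpow_le`).

The key point is that `u_R` increases to `min (|f|, M)` as `R → ∞` (`iSup_min_exitCost`). If not, for
some `x` curves leaving arbitrarily large balls have `ρ`-integral at most some `a < min (|f x|, M)`.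
They subconverge to a ray `γ` from `x` with `∫ ρ(γ) ≤ a`. Since `ρ` is bounded below on compact sets,
`γ` tends to `∞`; since `∫ M h(γ) ≤ a < M`, it is not in `Γ`, so `f` tends to `0` along it, and hence
`|f x| ≤ ∫ g(γ) ≤ a`, a contradiction. Letting `R → ∞` and then `M → ∞` gives `∫ |f|^p < ∞`.
-/

open MeasureTheory Metric Set Filter
open scoped ENNReal NNReal Topology

/-- `X` supports a global `(p,p)`-Sobolev inequality for compactly supported functions. -/
def GlobalSobolevInequality {X : Type*} [MetricSpace X] [MeasurableSpace X]
    (p : ℝ) (μ : Measure X) : Prop :=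
  ∃ Cs : ℝ, 0 < Cs ∧ ∀ (u : X → ℝ) (g : X → ℝ≥0∞), Measurable u → HasCompactSupport u →
    (∫⁻ x, ENNReal.ofReal |u x| ^ p ∂μ) < ⊤ → Measurable g → IsUpperGradient g u →
    (∫⁻ x, ENNReal.ofReal |u x| ^ p ∂μ) ≤ ENNReal.ofReal Cs * ∫⁻ x, g x ^ p ∂μ

/-- A ray `γ : [0,∞) → X` tends to `∞` if it eventually leaves every ball around `γ 0`. -/
def TendsToInfinity {X : Type*} [MetricSpace X] (γ : ℝ → X) : Prop :=
  ∀ R : ℝ, 0 < R → ∃ T : ℝ, 0 < T ∧ ∀ t : ℝ, T < t → R ≤ dist (γ 0) (γ t)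

/-! ### Integrals over intervals -/

theorem setLIntegral_Icc_shift (F : ℝ → ℝ≥0∞) (a s t : ℝ) :
    ∫⁻ τ in Icc s t, F (a + τ) = ∫⁻ τ in Icc (a + s) (a + t), F τ := by
  have h := (measurePreserving_add_left volume a).setLIntegral_comp_preimage_emb
    (measurableEmbedding_addLeft a) F (Icc (a + s) (a + t))
  rw [← h]
  congr 2
  ext x
  simp

theorem setLIntegral_Icc_reflect (F : ℝ → ℝ≥0∞) (L : ℝ) :
    ∫⁻ τ in Icc 0 L, F (L - τ) = ∫⁻ τ in Icc 0 L, F τ := by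
  have h := (Measure.measurePreserving_sub_left volume L).setLIntegral_comp_preimage_emb
    (MeasurableEquiv.subLeft L).measurableEmbedding F (Icc 0 L)
  rw [← h]
  congr 2
  ext x
  simp [and_comm]

/-- If `F` has finite integral over `[0,∞)`, its integrals over unit intervals are eventually
small: otherwise infinitely many disjoint unit intervals each contribute at least `c`. No
measurability of `F` is needed. -/
theorem exists_setLIntegral_Icc_lt {F : ℝ → ℝ≥0∞} (hF : ∫⁻ t in Ici (0 : ℝ), F t ≠ ⊤)
    {c : ℝ≥0∞} (hc : c ≠ 0) :
    ∃ T : ℝ, 0 < T ∧ ∀ t, T < t → ∫⁻ s in Icc t (t + 1), F s < c := by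
  by_contra! H
  have key : ∀ n : ℕ, ∃ T : ℝ, 0 < T ∧ (n : ℝ≥0∞) * c ≤ ∫⁻ s in Icc 0 T, F s := by
    intro n
    induction n with
    | zero => exact ⟨1, one_pos, by simp⟩
    | succ n ih =>
      obtain ⟨T, hT, hn⟩ := ih
      obtain ⟨t, ht, hct⟩ := H T hT
      refine ⟨t + 1, by linarith, ?_⟩
      have hdisj : Disjoint (Icc 0 T) (Icc t (t + 1)) := by
        rw [Set.disjoint_left]
        rintro x ⟨_, hx⟩ ⟨hx', _⟩
        linarith
      calc ((n + 1 : ℕ) : ℝ≥0∞) * c = n * c + c := by push_cast; ring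
        _ ≤ (∫⁻ s in Icc 0 T, F s) + ∫⁻ s in Icc t (t + 1), F s := add_le_add hn hct
        _ = ∫⁻ s in Icc 0 T ∪ Icc t (t + 1), F s :=
          (lintegral_union measurableSet_Icc hdisj).symm
        _ ≤ ∫⁻ s in Icc 0 (t + 1), F s := by
          apply lintegral_mono_set
          rintro x (⟨h1, h2⟩ | ⟨h1, h2⟩)
          · exact ⟨h1, by linarith⟩
          · exact ⟨by linarith, h2⟩
  have hle : ∀ n : ℕ, (n : ℝ≥0∞) * c ≤ ∫⁻ t in Ici (0 : ℝ), F t := fun n => by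
    obtain ⟨T, _, h⟩ := key n
    exact h.trans (lintegral_mono_set Icc_subset_Ici_self)
  obtain ⟨n, hn⟩ := ENNReal.exists_nat_mul_gt hc hF
  exact absurd (hle n) (not_le.2 hn)

theorem exists_mem_lt_of_setLIntegral_Icc_lt {F : ℝ → ℝ≥0∞} {t : ℝ} {c : ℝ≥0∞}
    (h : ∫⁻ s in Icc t (t + 1), F s < c) : ∃ s ∈ Icc t (t + 1), F s < c := by
  by_contra! H
  refine absurd h (not_lt.2 ?_)
  calc c = ∫⁻ _ in Icc t (t + 1), c := by simp
    _ ≤ _ := setLIntegral_mono' measurableSet_Icc H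

/-! ### Limits of curves -/

section Metric

variable {X : Type*} [MetricSpace X]

theorem lipschitzWith_max_zero {γ : ℝ → X} (h : LipschitzOnWith 1 γ (Ici 0)) :
    LipschitzWith 1 (fun t => γ (max t 0)) := by
  have h1 : LipschitzWith 1 (fun t : ℝ => max t 0) := LipschitzWith.id.max_const 0
  have h2 := h.comp (h1.lipschitzOnWith (s := univ)) (fun t _ => le_max_right t 0)
  simpa [lipschitzOnWith_univ, Function.comp_def] using h2

theorem lipschitzWith_clamp {γ : ℝ → X} {L : ℝ} (hL : 0 ≤ L)
    (h : LipschitzOnWith 1 γ (Icc 0 L)) :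
    LipschitzWith 1 (fun t => γ (max 0 (min L t))) := by
  have h1 : LipschitzWith 1 (fun t : ℝ => max 0 (min L t)) :=
    (LipschitzWith.id.const_min L).const_max 0
  have h2 := h.comp (h1.lipschitzOnWith (s := univ))
    (fun t _ => ⟨le_max_left _ _, max_le hL (min_le_left _ _)⟩)
  simpa [lipschitzOnWith_univ, Function.comp_def] using h2

/-- The upper gradient inequality along a subinterval `[s,t]` of a curve, by translation of the
parameter. -/
theorem IsUpperGradient.segment {g : X → ℝ≥0∞} {u : X → ℝ} (hg : IsUpperGradient g u)
    {γ : ℝ → X} (hγ : LipschitzWith 1 γ) {s t : ℝ} (hst : s ≤ t) :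
    ENNReal.ofReal |u (γ t) - u (γ s)| ≤ ∫⁻ τ in Icc s t, g (γ τ) := by
  have h1 : LipschitzWith 1 (fun τ => γ (s + τ)) := by
    have := hγ.comp (LipschitzWith.of_dist_le_mul (K := 1) (f := fun τ : ℝ => s + τ) (by simp))
    simpa [Function.comp_def] using this
  have h := hg (t - s) (fun τ => γ (s + τ)) (by linarith) h1.lipschitzOnWith
  rw [setLIntegral_Icc_shift (fun τ => g (γ τ))] at h
  simpa using h

variable [ProperSpace X]

/-- Arzelà–Ascoli for `1`-Lipschitz curves with convergent starting points in a proper space. -/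
theorem exists_pointwise_limit_curve {γ : ℕ → ℝ → X} {x : X}
    (hγ : ∀ n, LipschitzWith 1 (γ n)) (h0 : Tendsto (fun n => γ n 0) atTop (𝓝 x)) :
    ∃ (φ : ℕ → ℕ) (γ' : ℝ → X), StrictMono φ ∧ LipschitzWith 1 γ' ∧
      ∀ t, Tendsto (fun n => γ (φ n) t) atTop (𝓝 (γ' t)) := by
  obtain ⟨r, hr⟩ : ∃ r, ∀ n, dist (γ n 0) x ≤ r := by
    obtain ⟨r, hr⟩ := (Metric.isBounded_range_of_tendsto _ h0).subset_closedBall x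
    exact ⟨r, fun n => hr ⟨n, rfl⟩⟩
  let S : Set C(ℝ, X) := {F | LipschitzWith 1 F ∧ dist (F 0) x ≤ r}
  have hS1 : IsCompact (ContinuousMap.toFun '' S) := by
    have himg : ContinuousMap.toFun '' S = {F | LipschitzWith 1 F} ∩ {F | dist (F 0) x ≤ r} := by
      ext F
      constructor
      · rintro ⟨G, hG, rfl⟩
        exact hG
      · rintro ⟨hF, hF0⟩
        exact ⟨⟨F, LipschitzWith.continuous hF⟩, ⟨hF, hF0⟩, rfl⟩
    rw [himg]
    refine IsCompact.of_isClosed_subset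
      (isCompact_univ_pi (fun t : ℝ => isCompact_closedBall x (|t| + r))) ?_ ?_
    · exact (isClosed_setOfPred_lipschitzWith 1).inter
        (isClosed_le ((continuous_apply (0 : ℝ)).dist continuous_const) continuous_const)
    · rintro F ⟨hF, hF0⟩ t -
      have h1 : dist (F t) (F 0) ≤ |t| := by
        simpa [Real.dist_eq] using LipschitzWith.dist_le_mul hF t 0
      have h2 : dist (F 0) x ≤ r := hF0
      exact (dist_triangle (F t) (F 0) x).trans (add_le_add h1 h2)
  have hS2 : Equicontinuous ((↑) : S → ℝ → X) :=
    (LipschitzWith.uniformEquicontinuous _ 1 fun F => F.2.1).equicontinuous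
  have hS := ArzelaAscoli.isCompact_of_equicontinuous S hS1 hS2
  obtain ⟨G, hG, φ, hφ, hlim⟩ := hS.tendsto_subseq
    (x := fun n => (⟨γ n, (hγ n).continuous⟩ : C(ℝ, X))) (fun n => ⟨hγ n, hr n⟩)
  refine ⟨φ, G, hφ, hG.1, fun t => ?_⟩
  exact ((ContinuousEvalConst.continuous_eval_const t).tendsto G).comp hlim

/-- Compactness of curves of bounded `ρ`-cost. Along a subsequence the curves converge pointwise,
their lengths converge to some `ℓ ∈ [0,∞]`, and by lower semicontinuity of `ρ` and Fatou's lemma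
the limit curve has cost at most `a` on `[0,ℓ)`. The value `ℓ = ∞` is the case of a ray. -/
theorem exists_limit_curve {ρ : X → ℝ≥0∞} (hρ : LowerSemicontinuous ρ)
    {γ : ℕ → ℝ → X} {L : ℕ → ℝ} {x : X} {a : ℝ≥0∞}
    (hγ : ∀ n, LipschitzWith 1 (γ n)) (h0 : Tendsto (fun n => γ n 0) atTop (𝓝 x))
    (hcost : ∀ n, ∫⁻ t in Icc 0 (L n), ρ (γ n t) ≤ a) :
    ∃ (φ : ℕ → ℕ) (γ' : ℝ → X) (ℓ : ℝ≥0∞), StrictMono φ ∧ LipschitzWith 1 γ' ∧ γ' 0 = x ∧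
      (∀ t, Tendsto (fun n => γ (φ n) t) atTop (𝓝 (γ' t))) ∧
      Tendsto (fun n => ENNReal.ofReal (L (φ n))) atTop (𝓝 ℓ) ∧
      ∫⁻ t in {t | 0 ≤ t ∧ ENNReal.ofReal t < ℓ}, ρ (γ' t) ≤ a := by
  obtain ⟨φ, γ', hφ, hγ', hlim⟩ := exists_pointwise_limit_curve hγ h0
  obtain ⟨ℓ, -, ψ, hψ, hℓ⟩ := (isCompact_univ (X := ℝ≥0∞)).tendsto_subseq
    (x := fun n => ENNReal.ofReal (L (φ n))) (fun _ => mem_univ _)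
  refine ⟨φ ∘ ψ, γ', ℓ, hφ.comp hψ, hγ', ?_, fun t => (hlim t).comp hψ.tendsto_atTop, hℓ, ?_⟩
  · exact tendsto_nhds_unique (hlim 0) (h0.comp hφ.tendsto_atTop)
  borelize X
  set A : Set ℝ := {t | 0 ≤ t ∧ ENNReal.ofReal t < ℓ} with hA
  have hAm : MeasurableSet A :=
    measurableSet_Ici.inter (ENNReal.measurable_ofReal measurableSet_Iio)
  set F : ℕ → ℝ → ℝ≥0∞ := fun n => (Icc 0 (L (φ (ψ n)))).indicator fun t => ρ (γ (φ (ψ n)) t)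
    with hF
  have hFm : ∀ n, Measurable (F n) := fun n =>
    (hρ.measurable.comp (hγ _).continuous.measurable).indicator measurableSet_Icc
  have hpt : ∀ t, A.indicator (fun t => ρ (γ' t)) t ≤ liminf (fun n => F n t) atTop := by
    intro t
    by_cases ht : t ∈ A
    · rw [indicator_of_mem ht]
      have h1 : ρ (γ' t) ≤ liminf (fun n => ρ (γ (φ (ψ n)) t)) atTop := by
        exact (LowerSemicontinuousAt.le_liminf (hρ (γ' t))).trans
          ((hlim t).comp hψ.tendsto_atTop).liminf_le_liminf_comp
      refine h1.trans (liminf_le_liminf ?_)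
      filter_upwards [hℓ.eventually (lt_mem_nhds ht.2)] with n hn
      have hn' : t < L (φ (ψ n)) := (ENNReal.ofReal_lt_ofReal_iff'.1 hn).1
      rw [hF]
      simp only
      rw [indicator_of_mem (show t ∈ Icc 0 (L (φ (ψ n))) from ⟨ht.1, hn'.le⟩)]
    · rw [indicator_of_notMem ht]; exact zero_le
  calc ∫⁻ t in A, ρ (γ' t) = ∫⁻ t, A.indicator (fun t => ρ (γ' t)) t :=
        (lintegral_indicator hAm _).symm
    _ ≤ ∫⁻ t, liminf (fun n => F n t) atTop := lintegral_mono hpt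
    _ ≤ liminf (fun n => ∫⁻ t, F n t) atTop := lintegral_liminf_le hFm
    _ ≤ liminf (fun _ : ℕ => a) atTop := by
        refine liminf_le_liminf (Eventually.of_forall fun n => ?_)
        rw [hF]
        simp only
        rw [lintegral_indicator measurableSet_Icc]
        exact hcost _
    _ = a := liminf_const a

/-- A ray of finite `ρ`-cost tends to `∞`: on a compact ball `ρ` is bounded below by a positive
constant, and each return to the ball of radius `R` costs a unit of time in that of radius
`R + 1`. -/
theorem tendsToInfinity_of_lintegral_ne_top {ρ : X → ℝ≥0∞} (hρ : LowerSemicontinuous ρ)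
    (hpos : ∀ x, 0 < ρ x) {γ : ℝ → X} (hγ : LipschitzWith 1 γ)
    (hfin : ∫⁻ t in Ici (0 : ℝ), ρ (γ t) ≠ ⊤) : TendsToInfinity γ := by
  intro R hR
  obtain ⟨y, -, hy⟩ := LowerSemicontinuousOn.exists_isMinOn
    (s := closedBall (γ 0) (R + 1)) ⟨γ 0, mem_closedBall_self (by linarith)⟩
    (isCompact_closedBall _ _) (hρ.lowerSemicontinuousOn _)
  obtain ⟨T, hT, h⟩ := exists_setLIntegral_Icc_lt hfin (hpos y).ne'
  refine ⟨T, hT, fun t ht => ?_⟩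
  by_contra! hlt
  obtain ⟨s, hs, hsy⟩ := exists_mem_lt_of_setLIntegral_Icc_lt (h t ht)
  refine absurd hsy (not_lt.2 (hy ?_))
  have h1 : dist (γ s) (γ t) ≤ 1 := by
    have := hγ.dist_le_mul s t
    rw [Real.dist_eq, abs_of_nonneg (by linarith [hs.1])] at this
    simp only [NNReal.coe_one, one_mul] at this
    linarith [hs.2]
  rw [mem_closedBall]
  have h2 := dist_triangle (γ s) (γ t) (γ 0)
  rw [dist_comm (γ t)] at h2
  linarith

end Metric

/-! ### The cost of reaching a set -/

section ExitCost

variable {X : Type*} [MetricSpace X]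

theorem lipschitzWith_concat {γ₁ γ₂ : ℝ → X} {L : ℝ} (h₁ : LipschitzWith 1 γ₁)
    (h₂ : LipschitzWith 1 γ₂) (h : γ₁ L = γ₂ 0) :
    LipschitzWith 1 (fun t => if t ≤ L then γ₁ t else γ₂ (t - L)) := by
  have key : ∀ s t, s ≤ L → L < t → dist (γ₁ s) (γ₂ (t - L)) ≤ t - s := by
    intro s t hs ht
    have e1 : dist (γ₁ s) (γ₁ L) ≤ L - s := by
      have := h₁.dist_le_mul s L
      rw [dist_comm s L, Real.dist_eq, abs_of_nonneg (by linarith)] at this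
      simpa using this
    have e2 : dist (γ₂ 0) (γ₂ (t - L)) ≤ t - L := by
      have := h₂.dist_le_mul 0 (t - L)
      rw [dist_comm 0 (t - L), Real.dist_eq, sub_zero, abs_of_nonneg (by linarith)] at this
      simpa using this
    have e3 := dist_triangle (γ₁ s) (γ₁ L) (γ₂ (t - L))
    rw [← h] at e2
    linarith
  refine LipschitzWith.of_dist_le_mul fun s t => ?_
  simp only [NNReal.coe_one, one_mul]
  split_ifs with hs ht ht
  · simpa using h₁.dist_le_mul s t
  · refine (key s t hs (not_le.1 ht)).trans ?_
    rw [dist_comm, Real.dist_eq]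
    exact le_abs_self _
  · rw [dist_comm]
    refine (key t s ht (not_le.1 hs)).trans ?_
    rw [Real.dist_eq]
    exact le_abs_self _
  · simpa using h₂.dist_le_mul (s - L) (t - L)

/-- The least `ρ`-cost of joining `x` to the set `F`: the infimum of `∫₀^L ρ(γ(t)) dt` over all
`1`-Lipschitz curves with `γ 0 = x` and `γ L ∈ F`. It is `⊤` if there is no such curve. Curves are
taken `1`-Lipschitz on all of `ℝ`, which is no restriction, since a curve on `[0,L]` can be
continued by constants. -/
noncomputable def exitCost (ρ : X → ℝ≥0∞) (F : Set X) (x : X) : ℝ≥0∞ :=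
  sInf {c | ∃ (L : ℝ) (γ : ℝ → X), 0 ≤ L ∧ LipschitzWith 1 γ ∧ γ 0 = x ∧ γ L ∈ F ∧
    c = ∫⁻ t in Icc 0 L, ρ (γ t)}

theorem exitCost_le {ρ : X → ℝ≥0∞} {F : Set X} {γ : ℝ → X} {L : ℝ} (hL : 0 ≤ L)
    (hγ : LipschitzWith 1 γ) (h : γ L ∈ F) :
    exitCost ρ F (γ 0) ≤ ∫⁻ t in Icc 0 L, ρ (γ t) :=
  sInf_le ⟨L, γ, hL, hγ, rfl, h, rfl⟩

theorem exists_of_exitCost_lt {ρ : X → ℝ≥0∞} {F : Set X} {x : X} {a : ℝ≥0∞}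
    (h : exitCost ρ F x < a) : ∃ (L : ℝ) (γ : ℝ → X), 0 ≤ L ∧ LipschitzWith 1 γ ∧ γ 0 = x ∧
      γ L ∈ F ∧ ∫⁻ t in Icc 0 L, ρ (γ t) ≤ a := by
  obtain ⟨c, ⟨L, γ, h1, h2, h3, h4, rfl⟩, hc⟩ := sInf_lt_iff.1 h
  exact ⟨L, γ, h1, h2, h3, h4, hc.le⟩

theorem exitCost_eq_zero {ρ : X → ℝ≥0∞} {F : Set X} {x : X} (hx : x ∈ F) :
    exitCost ρ F x = 0 := by
  have h := exitCost_le (ρ := ρ) (F := F) (γ := fun _ => x) le_rfl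
    ((LipschitzWith.const x).weaken zero_le_one) hx
  simpa using h

theorem exitCost_anti {ρ : X → ℝ≥0∞} {F F' : Set X} (h : F' ⊆ F) (x : X) :
    exitCost ρ F x ≤ exitCost ρ F' x := by
  apply sInf_le_sInf
  rintro c ⟨L, γ, h1, h2, h3, h4, h5⟩
  exact ⟨L, γ, h1, h2, h3, h h4, h5⟩

/-- One half of the statement that `ρ` is an upper gradient of `exitCost ρ F`: a curve from `γ L`
to `F` can be preceded by `γ`. -/
theorem exitCost_start_le (ρ : X → ℝ≥0∞) (F : Set X) {γ : ℝ → X} {L : ℝ} (hL : 0 ≤ L)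
    (hγ : LipschitzWith 1 γ) :
    exitCost ρ F (γ 0) ≤ (∫⁻ t in Icc 0 L, ρ (γ t)) + exitCost ρ F (γ L) := by
  rw [exitCost.eq_def ρ F (γ L), ENNReal.add_sInf]
  refine le_iInf₂ ?_
  rintro c ⟨L', γ', hL', hγ', h0, hF, rfl⟩
  set η : ℝ → X := fun t => if t ≤ L then γ t else γ' (t - L) with hη
  have hη0 : η 0 = γ 0 := by simp [hη, hL]
  have hηL : ∀ t ∈ Icc L (L + L'), η t = γ' (-L + t) := by
    intro t ht
    rcases ht.1.eq_or_lt with rfl | hlt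
    · simp [hη, h0]
    · simp only [hη, if_neg (not_le.2 hlt)]
      congr 1; ring
  have hηF : η (L + L') ∈ F := by
    rw [hηL _ ⟨by linarith, le_rfl⟩]
    simpa using hF
  rw [← hη0]
  refine (exitCost_le (by linarith) (lipschitzWith_concat hγ hγ' h0.symm) hηF).trans ?_
  rw [← Icc_union_Icc_eq_Icc hL (by linarith : L ≤ L + L')]
  refine (lintegral_union_le _ _ _).trans (add_le_add (le_of_eq ?_) (le_of_eq ?_))
  · refine setLIntegral_congr_fun measurableSet_Icc fun t ht => ?_
    simp [ht.2]
  · rw [setLIntegral_congr_fun measurableSet_Icc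
      (fun t ht => congrArg ρ (hηL t ht) : EqOn (fun t => ρ (η t)) (fun t => ρ (γ' (-L + t))) _),
      setLIntegral_Icc_shift (fun t => ρ (γ' t))]
    simp

/-- The other half, obtained by running `γ` backwards. -/
theorem exitCost_end_le (ρ : X → ℝ≥0∞) (F : Set X) {γ : ℝ → X} {L : ℝ} (hL : 0 ≤ L)
    (hγ : LipschitzWith 1 γ) :
    exitCost ρ F (γ L) ≤ (∫⁻ t in Icc 0 L, ρ (γ t)) + exitCost ρ F (γ 0) := by
  have h1 : LipschitzWith 1 (fun t => γ (L - t)) := by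
    have := hγ.comp (LipschitzWith.of_dist_le_mul (K := 1) (f := fun τ : ℝ => L - τ)
      (fun s t => by
        rw [NNReal.coe_one, one_mul, Real.dist_eq, Real.dist_eq, abs_sub_comm s]
        apply le_of_eq; congr 1; ring))
    simpa [Function.comp_def] using this
  have h := exitCost_start_le ρ F hL h1
  rw [setLIntegral_Icc_reflect (fun t => ρ (γ t))] at h
  simpa using h

/-- The truncation of `|f|` by `M` and by the exit cost has upper gradient `ρ`. The real value is
taken by `toReal`, which loses nothing because the minimum is at most `M`. -/
theorem isUpperGradient_min_exitCost {ρ g : X → ℝ≥0∞} {f : X → ℝ} (hg : IsUpperGradient g f)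
    (hgρ : ∀ x, g x ≤ ρ x) (M : ℕ) (F : Set X) :
    IsUpperGradient ρ
      (fun x => (min (min (ENNReal.ofReal |f x|) M) (exitCost ρ F x)).toReal) := by
  intro L γ₀ hL hγ₀
  set γ : ℝ → X := fun t => γ₀ (max 0 (min L t)) with hγdef
  have hγ : LipschitzWith 1 γ := lipschitzWith_clamp hL hγ₀
  have hγeq : ∀ t ∈ Icc 0 L, γ t = γ₀ t := fun t ht => by simp [hγdef, ht.1, ht.2]
  rw [← hγeq L ⟨hL, le_rfl⟩, ← hγeq 0 ⟨le_rfl, hL⟩,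
    ← setLIntegral_congr_fun measurableSet_Icc
      (fun t ht => congrArg ρ (hγeq t ht) : EqOn (fun t => ρ (γ t)) (fun t => ρ (γ₀ t)) _)]
  set I := ∫⁻ t in Icc 0 L, ρ (γ t)
  set v : X → ℝ≥0∞ := fun x => min (min (ENNReal.ofReal |f x|) M) (exitCost ρ F x) with hv
  have hf : ENNReal.ofReal |f (γ L) - f (γ 0)| ≤ I :=
    (hg L γ hL hγ.lipschitzOnWith).trans (lintegral_mono fun t => hgρ _)
  have habs : ∀ a b : ℝ, ENNReal.ofReal |a - b| ≤ I →
      ENNReal.ofReal |a| ≤ I + ENNReal.ofReal |b| := by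
    intro a b h
    calc ENNReal.ofReal |a| ≤ ENNReal.ofReal (|a - b| + |b|) := by
          apply ENNReal.ofReal_le_ofReal
          have := abs_add_le (a - b) b
          simpa using this
      _ = ENNReal.ofReal |a - b| + ENNReal.ofReal |b| :=
          ENNReal.ofReal_add (abs_nonneg _) (abs_nonneg _)
      _ ≤ _ := by gcongr
  have hmin : ∀ a b a' b' : ℝ≥0∞, a ≤ I + a' → b ≤ I + b' → min a b ≤ I + min a' b' := by
    intro a b a' b' h h'
    rw [← min_add_add_left]
    exact min_le_min h h'
  have h1 : v (γ 0) ≤ I + v (γ L) :=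
    hmin _ _ _ _ (hmin _ _ _ _ (habs _ _ (by rwa [abs_sub_comm])) le_add_self)
      (exitCost_start_le ρ F hL hγ)
  have h2 : v (γ L) ≤ I + v (γ 0) :=
    hmin _ _ _ _ (hmin _ _ _ _ (habs _ _ hf) le_add_self) (exitCost_end_le ρ F hL hγ)
  have hfin : ∀ x, v x ≠ ⊤ := fun x =>
    ne_top_of_le_ne_top (ENNReal.natCast_ne_top M) ((min_le_left _ _).trans (min_le_right _ _))
  change ENNReal.ofReal |(v (γ L)).toReal - (v (γ 0)).toReal| ≤ I
  by_cases hI : I = ⊤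
  · rw [hI]; exact le_top
  have h1' := ENNReal.toReal_mono (ENNReal.add_ne_top.2 ⟨hI, hfin _⟩) h1
  have h2' := ENNReal.toReal_mono (ENNReal.add_ne_top.2 ⟨hI, hfin _⟩) h2
  rw [ENNReal.toReal_add hI (hfin _)] at h1' h2'
  refine ENNReal.ofReal_le_of_le_toReal (abs_le.2 ⟨by linarith, by linarith⟩)

variable [ProperSpace X]

/-- Near-optimal curves from points converging to `x` subconverge. If the limit has finite length
it ends outside the ball; if it is a ray, it has finite cost, so it tends to `∞` and leaves the
ball in finite time. -/
theorem lowerSemicontinuous_exitCost {ρ : X → ℝ≥0∞} (hρ : LowerSemicontinuous ρ)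
    (hpos : ∀ x, 0 < ρ x) (x₀ : X) (R : ℝ) :
    LowerSemicontinuous (exitCost ρ (ball x₀ R)ᶜ) := by
  rw [lowerSemicontinuous_iff_isClosed_preimage]
  intro a
  rw [← isSeqClosed_iff_isClosed]
  intro xs x hxs hx
  change exitCost ρ (ball x₀ R)ᶜ x ≤ a
  refine le_of_forall_gt fun b hb => ?_
  obtain ⟨b', hab', hb'b⟩ := exists_between hb
  refine lt_of_le_of_lt ?_ hb'b
  choose L γ hL hγ hγ0 hγF hcost using
    fun n => exists_of_exitCost_lt (lt_of_le_of_lt (hxs n) hab')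
  obtain ⟨φ, η, ℓ, hφ, hη, hη0, hlim, hℓ, hint⟩ := exists_limit_curve hρ hγ
    (by simpa only [hγ0] using hx) hcost
  -- Either the lengths diverge and the limit is a ray, or they converge and so do the endpoints.
  rcases eq_or_ne ℓ ⊤ with rfl | hℓtop
  · have hset : {t : ℝ | 0 ≤ t ∧ ENNReal.ofReal t < ⊤} = Ici 0 := by ext; simp
    rw [hset] at hint
    have hb' : b' ≠ ⊤ := (hb'b.trans_le le_top).ne
    have hinf := tendsToInfinity_of_lintegral_ne_top hρ hpos hη (ne_top_of_le_ne_top hb' hint)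
    obtain ⟨T, hT, h⟩ := hinf (dist (η 0) x₀ + max R 1) (by positivity)
    have hfar : η (T + 1) ∈ (ball x₀ R)ᶜ := by
      have h1 := h (T + 1) (by linarith)
      have h2 := dist_triangle (η 0) x₀ (η (T + 1))
      rw [dist_comm x₀] at h2
      simp only [mem_compl_iff, mem_ball, not_lt]
      linarith [le_max_left R 1]
    rw [← hη0]
    exact (exitCost_le (by linarith) hη hfar).trans
      ((lintegral_mono_set Icc_subset_Ici_self).trans hint)
  · set l := ℓ.toReal with hl
    have hl0 : 0 ≤ l := ENNReal.toReal_nonneg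
    have hLl : Tendsto (fun n => L (φ n)) atTop (𝓝 l) := by
      have := (ENNReal.tendsto_toReal hℓtop).comp hℓ
      simpa [Function.comp_def, ENNReal.toReal_ofReal (hL _)] using this
    have hend : Tendsto (fun n => γ (φ n) (L (φ n))) atTop (𝓝 (η l)) := by
      rw [tendsto_iff_dist_tendsto_zero]
      have hz : Tendsto (fun n => dist (L (φ n)) l + dist (γ (φ n) l) (η l)) atTop (𝓝 0) := by
        simpa using (tendsto_iff_dist_tendsto_zero.1 hLl).add
          (tendsto_iff_dist_tendsto_zero.1 (hlim l))
      refine squeeze_zero (fun _ => dist_nonneg) (fun n => ?_) hz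
      refine (dist_triangle _ (γ (φ n) l) _).trans (add_le_add ?_ le_rfl)
      simpa using (hγ (φ n)).dist_le_mul (L (φ n)) l
    have hηF : η l ∈ (ball x₀ R)ᶜ :=
      isOpen_ball.isClosed_compl.mem_of_tendsto hend (Eventually.of_forall fun n => hγF _)
    rw [← hη0]
    refine (exitCost_le hl0 hη hηF).trans (le_trans (le_of_eq ?_) hint)
    rw [← setLIntegral_congr (Ico_ae_eq_Icc (a := (0 : ℝ)) (b := l))]
    congr 2
    ext t
    refine and_congr_right fun ht => ?_
    rw [hl, ENNReal.ofReal_lt_iff_lt_toReal ht hℓtop]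

/-- If leaving arbitrarily large balls from `x` costs less than `a`, some ray from `x` costs at
most `a`: curves that leave ever larger balls have lengths tending to `∞`. -/
theorem exists_ray_of_exitCost_lt {ρ : X → ℝ≥0∞} (hρ : LowerSemicontinuous ρ) {x₀ x : X}
    {a : ℝ≥0∞} (h : ∀ n : ℕ, exitCost ρ (ball x₀ n)ᶜ x < a) :
    ∃ γ : ℝ → X, LipschitzWith 1 γ ∧ γ 0 = x ∧ ∫⁻ t in Ici (0 : ℝ), ρ (γ t) ≤ a := by
  choose L γ hL hγ hγ0 hγF hcost using fun n => exists_of_exitCost_lt (h n)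
  obtain ⟨φ, η, ℓ, hφ, hη, hη0, -, hℓ, hint⟩ := exists_limit_curve hρ hγ
    (by simp only [hγ0]; exact tendsto_const_nhds) hcost
  refine ⟨η, hη, hη0, ?_⟩
  have hLtop : Tendsto L atTop atTop := by
    refine tendsto_atTop_mono (f := fun n : ℕ => (n : ℝ) - dist x x₀) (fun n => ?_) ?_
    · have h1 : (n : ℝ) ≤ dist (γ n (L n)) x₀ := by simpa using hγF n
      have h2 := (hγ n).dist_le_mul (L n) 0
      rw [hγ0, Real.dist_eq, sub_zero, abs_of_nonneg (hL n)] at h2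
      simp only [NNReal.coe_one, one_mul] at h2
      have h3 := dist_triangle (γ n (L n)) x x₀
      linarith
    · exact tendsto_atTop_add_const_right _ _ tendsto_natCast_atTop_atTop
  have hℓtop : ℓ = ⊤ := tendsto_nhds_unique hℓ
    (ENNReal.tendsto_ofReal_atTop.comp (hLtop.comp hφ.tendsto_atTop))
  subst hℓtop
  have hset : {t : ℝ | 0 ≤ t ∧ ENNReal.ofReal t < ⊤} = Ici 0 := by ext; simp
  rwa [hset] at hint

end ExitCost

/-! ### Truncations of `|f|` and the modulus of rays -/

section Main

variable {X : Type*}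

theorem lintegral_rpow_le_of_tendsto [MeasurableSpace X] {μ : Measure X} {p : ℝ} {v : ℕ → X → ℝ≥0∞}
    {w : X → ℝ≥0∞} (hv : ∀ n, Measurable (v n))
    (h : ∀ x, Tendsto (fun n => v n x) atTop (𝓝 (w x))) {A : ℝ≥0∞}
    (hA : ∀ n, ∫⁻ x, v n x ^ p ∂μ ≤ A) : ∫⁻ x, w x ^ p ∂μ ≤ A := by
  calc ∫⁻ x, w x ^ p ∂μ = ∫⁻ x, liminf (fun n => v n x ^ p) atTop ∂μ := by
        refine lintegral_congr fun x => ?_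
        exact (((ENNReal.continuous_rpow_const (y := p)).tendsto _).comp (h x)).liminf_eq.symm
    _ ≤ liminf (fun n => ∫⁻ x, v n x ^ p ∂μ) atTop :=
        lintegral_liminf_le fun n => (hv n).pow_const p
    _ ≤ liminf (fun _ : ℕ => A) atTop := liminf_le_liminf (Eventually.of_forall hA)
    _ = A := liminf_const A

/-- Vitali–Carathéodory: a positive lower semicontinuous majorant of `g` and `h`, of controlled
`L^p` size. It is the `p`-th root of a lower semicontinuous majorant of `g^p + h^p + w`, where `w`
is a positive function of small integral. -/
theorem exists_lowerSemicontinuous_weight [MetricSpace X] [MeasurableSpace X] [BorelSpace X]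
    [ProperSpace X] (μ : Measure X) [IsLocallyFiniteMeasure μ] {p : ℝ} (hp : 0 < p)
    {g h : X → ℝ≥0∞} (hg : Measurable g) (hh : Measurable h) :
    ∃ ρ : X → ℝ≥0∞, LowerSemicontinuous ρ ∧ (∀ x, 0 < ρ x) ∧ (∀ x, g x ≤ ρ x) ∧
      (∀ x, h x ≤ ρ x) ∧ ∫⁻ x, ρ x ^ p ∂μ ≤ (∫⁻ x, g x ^ p ∂μ) + (∫⁻ x, h x ^ p ∂μ) + 2 := by
  obtain ⟨w, hw, hwm, hwint⟩ := exists_pos_lintegral_lt_of_sigmaFinite μ one_ne_zero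
  obtain ⟨φ, hφ, hφlsc, hφint⟩ := exists_le_lowerSemicontinuous_lintegral_ge μ
    (fun x => g x ^ p + h x ^ p + w x)
    (((hg.pow_const p).add (hh.pow_const p)).add hwm.coe_nnreal_ennreal) one_ne_zero
  have hroot : ∀ {a b : ℝ≥0∞}, a ^ p ≤ b → a ≤ b ^ p⁻¹ := fun {a b} hab =>
    (ENNReal.le_rpow_inv_iff hp).2 hab
  refine ⟨fun x => φ x ^ p⁻¹, ?_, fun x => ?_, fun x => hroot ?_, fun x => hroot ?_, ?_⟩
  · exact ENNReal.continuous_rpow_const.comp_lowerSemicontinuous hφlsc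
      (ENNReal.monotone_rpow_of_nonneg (inv_nonneg.2 hp.le))
  · have : 0 < φ x := lt_of_lt_of_le (ENNReal.coe_pos.2 (hw x)) (le_add_self.trans (hφ x))
    exact ENNReal.rpow_pos_of_nonneg this (inv_nonneg.2 hp.le)
  · exact (le_self_add.trans le_self_add).trans (hφ x)
  · exact (le_add_self.trans le_self_add).trans (hφ x)
  · simp only [ENNReal.rpow_inv_rpow hp.ne']
    refine hφint.trans ?_
    rw [lintegral_add_right _ hwm.coe_nnreal_ennreal, lintegral_add_left (hg.pow_const p),
      add_assoc, ← one_add_one_eq_two (R := ℝ≥0∞)]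
    gcongr

/-- As the balls exhaust the space, the truncated functions increase to `min |f| M`. Otherwise
there is a ray from `x` of `ρ`-cost less than `min |f x| M`; its cost is below `M`, so by
admissibility of `h` the function `f` tends to `0` along it, and then the upper gradient
inequality bounds `|f x|` by the cost. -/
theorem iSup_min_exitCost [MetricSpace X] [MeasurableSpace X] [BorelSpace X]
    [ProperSpace X] {ρ g h : X → ℝ≥0∞} {f : X → ℝ}
    (hρ : LowerSemicontinuous ρ) (hpos : ∀ x, 0 < ρ x) (hg : IsUpperGradient g f)
    (hgρ : ∀ x, g x ≤ ρ x) {M : ℕ} (hhρ : ∀ x, M * h x ≤ ρ x) (hh : Measurable h)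
    (hadm : ∀ γ ∈ {γ : ℝ → X | LipschitzOnWith 1 γ (Ici 0) ∧ TendsToInfinity γ ∧
        ¬ Tendsto (fun t : ℝ => f (γ t)) atTop (𝓝 (0 : ℝ))},
      1 ≤ ∫⁻ t in Ici (0 : ℝ), h (γ t)) (x₀ x : X) :
    ⨆ n : ℕ, min (min (ENNReal.ofReal |f x|) M) (exitCost ρ (ball x₀ n)ᶜ x) =
      min (ENNReal.ofReal |f x|) M := by
  refine le_antisymm (iSup_le fun n => min_le_left _ _) ?_
  by_contra! hlt
  obtain ⟨a, ha, hab⟩ := exists_between hlt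
  have hexit : ∀ n : ℕ, exitCost ρ (ball x₀ n)ᶜ x < a := by
    intro n
    have h1 := (le_iSup (fun n : ℕ => min (min (ENNReal.ofReal |f x|) M)
      (exitCost ρ (ball x₀ n)ᶜ x)) n).trans_lt ha
    exact (min_lt_iff.1 h1).resolve_left (not_lt.2 hab.le)
  obtain ⟨γ, hγ, rfl, hint⟩ := exists_ray_of_exitCost_lt hρ hexit
  have haM : a < M := hab.trans_le (min_le_right _ _)
  have hatop : a ≠ ⊤ := haM.ne_top
  have hinf := tendsToInfinity_of_lintegral_ne_top hρ hpos hγ (ne_top_of_le_ne_top hatop hint)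
  have hlim : Tendsto (fun t : ℝ => f (γ t)) atTop (𝓝 0) := by
    by_contra hnot
    have h1 := hadm γ ⟨hγ.lipschitzOnWith, hinf, hnot⟩
    refine absurd haM (not_lt.2 ?_)
    calc (M : ℝ≥0∞) = M * 1 := (mul_one _).symm
      _ ≤ M * ∫⁻ t in Ici (0 : ℝ), h (γ t) := by gcongr
      _ = ∫⁻ t in Ici (0 : ℝ), M * h (γ t) :=
          (lintegral_const_mul _ (hh.comp hγ.continuous.measurable)).symm
      _ ≤ ∫⁻ t in Ici (0 : ℝ), ρ (γ t) := lintegral_mono fun t => hhρ _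
      _ ≤ a := hint
  have hlim' : Tendsto (fun t : ℝ => ENNReal.ofReal |f (γ t) - f (γ 0)|) atTop
      (𝓝 (ENNReal.ofReal |0 - f (γ 0)|)) :=
    (ENNReal.continuous_ofReal.tendsto _).comp (hlim.sub_const _).abs
  have hle : ENNReal.ofReal |0 - f (γ 0)| ≤ a := by
    refine le_of_tendsto hlim' ?_
    filter_upwards [eventually_ge_atTop 0] with t ht
    exact ((hg t γ ht hγ.lipschitzOnWith).trans (lintegral_mono fun t => hgρ _)).trans
      ((lintegral_mono_set Icc_subset_Ici_self).trans hint)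
  rw [zero_sub, abs_neg] at hle
  exact absurd (hab.trans_le (min_le_left _ _)) (not_lt.2 hle)

/-- The Sobolev inequality applied to the truncated function, which is bounded and vanishes outside
the ball. -/
theorem lintegral_min_rpow_le [MetricSpace X] [MeasurableSpace X] [BorelSpace X]
    [ProperSpace X] {μ : Measure X}
    (hball : ∀ (x : X) (r : ℝ), 0 < r → μ (ball x r) < ⊤) {p : ℝ} (hp : 0 < p) {Cs : ℝ}
    (hsob : ∀ (u : X → ℝ) (g : X → ℝ≥0∞), Measurable u → HasCompactSupport u →
      (∫⁻ x, ENNReal.ofReal |u x| ^ p ∂μ) < ⊤ → Measurable g → IsUpperGradient g u →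
      (∫⁻ x, ENNReal.ofReal |u x| ^ p ∂μ) ≤ ENNReal.ofReal Cs * ∫⁻ x, g x ^ p ∂μ)
    {ρ g : X → ℝ≥0∞} {f : X → ℝ} (hf : Measurable f) (hρ : LowerSemicontinuous ρ)
    (hpos : ∀ x, 0 < ρ x) (hg : IsUpperGradient g f) (hgρ : ∀ x, g x ≤ ρ x) (M : ℕ) (x₀ : X)
    {R : ℝ} (hR : 0 < R) :
    ∫⁻ x, min (min (ENNReal.ofReal |f x|) M) (exitCost ρ (ball x₀ R)ᶜ x) ^ p ∂μ ≤
      ENNReal.ofReal Cs * ∫⁻ x, ρ x ^ p ∂μ := by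
  set v : X → ℝ≥0∞ := fun x => min (min (ENNReal.ofReal |f x|) M) (exitCost ρ (ball x₀ R)ᶜ x)
    with hv
  have hvM : ∀ x, v x ≤ M := fun x => (min_le_left _ _).trans (min_le_right _ _)
  have hvfin : ∀ x, v x ≠ ⊤ := fun x => ne_top_of_le_ne_top (ENNReal.natCast_ne_top M) (hvM x)
  have hvm : Measurable v :=
    ((hf.norm.ennreal_ofReal).min measurable_const).min
      (lowerSemicontinuous_exitCost hρ hpos x₀ R).measurable
  have hvz : ∀ x ∉ ball x₀ R, v x = 0 := fun x hx => by
    simp [hv, exitCost_eq_zero (ρ := ρ) (show x ∈ (ball x₀ R)ᶜ from hx)]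
  have habs : ∀ x, ENNReal.ofReal |(v x).toReal| = v x := fun x => by
    rw [abs_of_nonneg ENNReal.toReal_nonneg, ENNReal.ofReal_toReal (hvfin x)]
  have h := hsob (fun x => (v x).toReal) ρ hvm.ennreal_toReal ?_ ?_ hρ.measurable
    (isUpperGradient_min_exitCost hg hgρ M _)
  · simpa only [habs] using h
  · refine HasCompactSupport.intro (isCompact_closedBall x₀ R) fun x hx => ?_
    rw [hvz x fun h' => hx (ball_subset_closedBall h'), ENNReal.toReal_zero]
  · simp only [habs]
    calc ∫⁻ x, v x ^ p ∂μ ≤ ∫⁻ x, (ball x₀ R).indicator (fun _ => (M : ℝ≥0∞) ^ p) x ∂μ := by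
          refine lintegral_mono fun x => ?_
          by_cases hx : x ∈ ball x₀ R
          · rw [indicator_of_mem hx]
            exact ENNReal.rpow_le_rpow (hvM x) hp.le
          · rw [indicator_of_notMem hx, hvz x hx, ENNReal.zero_rpow_of_pos hp]
      _ = (M : ℝ≥0∞) ^ p * μ (ball x₀ R) := by
          rw [lintegral_indicator_const measurableSet_ball]
      _ < ⊤ := ENNReal.mul_lt_top
          (ENNReal.rpow_lt_top_of_nonneg hp.le (ENNReal.natCast_ne_top M)) (hball x₀ R hR)

/-- If `|f|` and its upper gradient both have finite integral along a ray, then `f` tends to `0`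
along it: on a late unit interval `|f|` is small somewhere and varies little. -/
theorem tendsto_zero_of_lintegral_ne_top [MetricSpace X] {f : X → ℝ} {g : X → ℝ≥0∞}
    (hg : IsUpperGradient g f) {γ : ℝ → X} (hγ : LipschitzOnWith 1 γ (Ici 0))
    (hfin : ∫⁻ t in Ici (0 : ℝ), max (ENNReal.ofReal |f (γ t)|) (g (γ t)) ≠ ⊤) :
    Tendsto (fun t => f (γ t)) atTop (𝓝 0) := by
  rw [Metric.tendsto_atTop]
  intro ε hε
  have hε' : ENNReal.ofReal (ε / 2) ≠ 0 := by simpa using hε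
  obtain ⟨T, hT, h⟩ := exists_setLIntegral_Icc_lt hfin hε'
  refine ⟨T + 1, fun t ht => ?_⟩
  have ht' : T < t := by linarith
  obtain ⟨s, hs, hlt⟩ := exists_mem_lt_of_setLIntegral_Icc_lt (h t ht')
  have h1 : |f (γ s)| < ε / 2 :=
    (ENNReal.ofReal_lt_ofReal_iff (by linarith)).1 ((le_max_left _ _).trans_lt hlt)
  have hseg := hg.segment (lipschitzWith_max_zero hγ) hs.1
  simp only [max_eq_left (show (0 : ℝ) ≤ t by linarith),
    max_eq_left (show (0 : ℝ) ≤ s by linarith [hs.1])] at hseg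
  have h2 : |f (γ s) - f (γ t)| < ε / 2 := by
    refine (ENNReal.ofReal_lt_ofReal_iff (by linarith)).1
      (hseg.trans_lt (lt_of_le_of_lt ?_ (h t ht')))
    refine (setLIntegral_mono' measurableSet_Icc fun τ hτ => ?_).trans
      (lintegral_mono_set (Icc_subset_Icc_right hs.2))
    rw [max_eq_left (show (0 : ℝ) ≤ τ by linarith [hτ.1])]
    exact le_max_right _ _
  rw [Real.dist_eq, sub_zero]
  rw [abs_lt] at *
  constructor <;> linarith

/-- A family on which a single `L^p` function has infinite integral has zero modulus: small
multiples of that function remain admissible. -/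
theorem rayModulus_eq_zero_of_lintegral_eq_top [MeasurableSpace X] {μ : Measure X} {p : ℝ}
    (hp : 0 < p) {Γ : Set (ℝ → X)} {m : X → ℝ≥0∞} (hm : Measurable m) (hmp : ∫⁻ x, m x ^ p ∂μ ≠ ⊤)
    (hΓ : ∀ γ ∈ Γ, ∫⁻ t in Ici (0 : ℝ), m (γ t) = ⊤) : RayModulus p μ Γ = 0 := by
  have hle : ∀ n : ℕ, RayModulus p μ Γ ≤ ((n : ℝ≥0∞) + 1)⁻¹ ^ p * ∫⁻ x, m x ^ p ∂μ := by
    intro n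
    have hn : ((n : ℝ≥0∞) + 1)⁻¹ ≠ ⊤ := by simp
    have hn0 : ((n : ℝ≥0∞) + 1)⁻¹ ≠ 0 := by simp
    refine (iInf₂_le (fun x => ((n : ℝ≥0∞) + 1)⁻¹ * m x) (hm.const_mul _)).trans
      ((iInf_le _ fun γ hγ => ?_).trans (le_of_eq ?_))
    · rw [lintegral_const_mul' _ _ hn, hΓ γ hγ, ENNReal.mul_top hn0]
      exact le_top
    · simp only [ENNReal.mul_rpow_of_nonneg _ _ hp.le]
      rw [lintegral_const_mul _ (hm.pow_const p)]
  have hlim : Tendsto (fun n : ℕ => ((n : ℝ≥0∞) + 1)⁻¹ ^ p * ∫⁻ x, m x ^ p ∂μ) atTop (𝓝 0) := by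
    have h1 : Tendsto (fun n : ℕ => ((n : ℝ≥0∞) + 1)⁻¹) atTop (𝓝 0) := by
      have := (tendsto_add_atTop_iff_nat 1).2 ENNReal.tendsto_inv_nat_nhds_zero
      simpa using this
    have h2 := ((ENNReal.continuous_rpow_const (y := p)).tendsto 0).comp h1
    rw [ENNReal.zero_rpow_of_pos hp] at h2
    simpa using ENNReal.Tendsto.mul_const h2 (Or.inr hmp)
  exact le_antisymm (ge_of_tendsto' hlim hle) zero_le

end Main

/-- under the standing assumptions, uniformly locally `p`-controlled geometry and
a global `(p,p)`-Sobolev inequality, a function `f ∈ D^{1,p}(X)` satisfies `∫ |f|ᵖ dμ < ∞`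
(i.e. `f ∈ N^{1,p}(X)`) if and only if the family of `1`-Lipschitz rays tending to `∞` along
which `f` does not converge to `0` has zero `p`-modulus. -/
theorem statement5 {X : Type*} [MetricSpace X] [MeasurableSpace X] [BorelSpace X]
    [ProperSpace X] [ConnectedSpace X]
    (μ : Measure X) (hXinf : μ Set.univ = ⊤)
    (hball : ∀ (x : X) (r : ℝ), 0 < r → 0 < μ (ball x r) ∧ μ (ball x r) < ⊤)
    (p : ℝ) (hp : 1 ≤ p)
    (hgeom : UniformlyLocallyControlledGeometry p μ)
    (hsob : GlobalSobolevInequality p μ)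
    (f : X → ℝ) (hfmeas : Measurable f)
    (hfD : ∃ g : X → ℝ≥0∞, Measurable g ∧ IsUpperGradient g f ∧ (∫⁻ x, g x ^ p ∂μ) < ⊤) :
    (∫⁻ x, ENNReal.ofReal |f x| ^ p ∂μ) < ⊤ ↔
      RayModulus p μ {γ : ℝ → X | LipschitzOnWith 1 γ (Set.Ici 0) ∧ TendsToInfinity γ ∧
        ¬ Tendsto (fun t : ℝ => f (γ t)) atTop (𝓝 (0 : ℝ))} = 0 := by
  have hp0 : 0 < p := by linarith
  obtain ⟨g, hgm, hg, hgint⟩ := hfD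
  constructor
  · intro hfint
    have hfm : Measurable fun x => ENNReal.ofReal |f x| := hfmeas.norm.ennreal_ofReal
    refine rayModulus_eq_zero_of_lintegral_eq_top hp0 (hfm.max hgm) (ne_of_lt ?_) ?_
    · calc ∫⁻ x, max (ENNReal.ofReal |f x|) (g x) ^ p ∂μ
          ≤ ∫⁻ x, (ENNReal.ofReal |f x| ^ p + g x ^ p) ∂μ := by
            refine lintegral_mono fun x => ?_
            rcases max_choice (ENNReal.ofReal |f x|) (g x) with h | h <;> simp only [h]
            exacts [le_self_add, le_add_self]
        _ = (∫⁻ x, ENNReal.ofReal |f x| ^ p ∂μ) + ∫⁻ x, g x ^ p ∂μ :=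
            lintegral_add_left (hfm.pow_const p) _
        _ < ⊤ := ENNReal.add_lt_top.2 ⟨hfint, hgint⟩
    · rintro γ ⟨hγ, -, hnot⟩
      by_contra hne
      exact hnot (tendsto_zero_of_lintegral_ne_top hg hγ hne)
  · intro hmod
    obtain ⟨Cs, -, hsob⟩ := hsob
    have : IsLocallyFiniteMeasure μ :=
      ⟨fun x => ⟨ball x 1, ball_mem_nhds x one_pos, (hball x 1 one_pos).2⟩⟩
    obtain ⟨x₀⟩ : Nonempty X := inferInstance
    set A : ℝ≥0∞ := ENNReal.ofReal Cs * ((∫⁻ x, g x ^ p ∂μ) + 1 + 2) with hA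
    have hAtop : A < ⊤ := ENNReal.mul_lt_top ENNReal.ofReal_lt_top
      (by simp [ENNReal.add_lt_top, hgint])
    have hfm : Measurable fun x => ENNReal.ofReal |f x| := hfmeas.norm.ennreal_ofReal
    have hM : ∀ M : ℕ, ∫⁻ x, min (ENNReal.ofReal |f x|) M ^ p ∂μ ≤ A := by
      intro M
      -- The bound on `∫ h^p` makes `∫ (M h)^p ≤ 1`, so the final bound `A` is independent of `M`.
      have hMtop : (M : ℝ≥0∞) ^ p ≠ ⊤ :=
        ENNReal.rpow_ne_top_of_nonneg hp0.le (ENNReal.natCast_ne_top M)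
      have hlt : RayModulus p μ {γ : ℝ → X | LipschitzOnWith 1 γ (Set.Ici 0) ∧
          TendsToInfinity γ ∧ ¬ Tendsto (fun t : ℝ => f (γ t)) atTop (𝓝 (0 : ℝ))} <
          ((M : ℝ≥0∞) ^ p)⁻¹ := by
        rw [hmod]; exact ENNReal.inv_pos.2 hMtop
      simp only [RayModulus, iInf_lt_iff] at hlt
      obtain ⟨h, hh, hadm, hhint⟩ := hlt
      obtain ⟨ρ, hρ, hpos, hgρ, hhρ, hρint⟩ := exists_lowerSemicontinuous_weight μ hp0 hgm
        (hh.const_mul (M : ℝ≥0∞))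
      have hρA : ENNReal.ofReal Cs * ∫⁻ x, ρ x ^ p ∂μ ≤ A := by
        refine mul_le_mul' le_rfl (hρint.trans ?_)
        gcongr
        simp only [ENNReal.mul_rpow_of_nonneg _ _ hp0.le]
        rw [lintegral_const_mul _ (hh.pow_const p)]
        exact (mul_le_mul' le_rfl hhint.le).trans (ENNReal.mul_inv_le_one _)
      -- The radii are `n + 1`, to be positive.
      refine lintegral_rpow_le_of_tendsto
        (v := fun (n : ℕ) x => min (min (ENNReal.ofReal |f x|) M)
          (exitCost ρ (ball x₀ (n + 1 : ℕ))ᶜ x))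
        (fun n => (hfm.min measurable_const).min
          (lowerSemicontinuous_exitCost hρ hpos x₀ _).measurable) (fun x => ?_)
        (fun n => (lintegral_min_rpow_le (fun x r hr => (hball x r hr).2) hp0 hsob hfmeas hρ hpos
          hg hgρ M x₀ (by positivity)).trans hρA)
      have hmono : Monotone fun n : ℕ =>
          min (min (ENNReal.ofReal |f x|) M) (exitCost ρ (ball x₀ n)ᶜ x) := fun m n hmn =>
        min_le_min le_rfl (exitCost_anti (compl_subset_compl.2 (ball_subset_ball (Nat.cast_le.2 hmn))) x)
      have hlim := tendsto_atTop_iSup hmono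
      rw [iSup_min_exitCost hρ hpos hg hgρ hhρ hh hadm x₀ x] at hlim
      exact (tendsto_add_atTop_iff_nat 1).2 hlim
    refine lt_of_le_of_lt (lintegral_rpow_le_of_tendsto
      (v := fun (M : ℕ) x => min (ENNReal.ofReal |f x|) M)
      (fun M => hfm.min measurable_const) (fun x => ?_) hM) hAtop
    obtain ⟨N, hN⟩ := ENNReal.exists_nat_gt (ENNReal.ofReal_ne_top (r := |f x|))
    refine tendsto_const_nhds.congr' ?_
    filter_upwards [eventually_ge_atTop N] with n hn
    exact (min_eq_left (hN.le.trans (Nat.cast_le.2 hn))).symm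
end
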